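/- arXiv:2202.04932 — 4 statements merged into one kernel-verified Lean document; each statement's English description precedes it below -/
import Mathlib

section
/- Let Q, Q' be quadratic polynomials over C and r a natural number. Then there exists a linear space of linear forms V with dim(V) ≤ 8r such that every linear combination αQ + βQ' with rank_s(αQ + βQ') ≤ r satisfies MS(αQ + βQ') ⊆ V. -/
open MvPolynomial

noncomputable section

/-- A linear form: a homogeneous polynomial of degree 1. -/
def IsLinForm {σ : Type*} (p : MvPolynomial σ ℂ) : Prop := p.IsHomogeneous 1

/-- `Q` admits a representation as a sum of `r` products of pairs of linear forms. -/
def HasRep {σ : Type*} (Q : MvPolynomial σ ℂ) (r : ℕ) : Prop :=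
  ∃ a b : Fin r → MvPolynomial σ ℂ,
    (∀ i, IsLinForm (a i)) ∧ (∀ i, IsLinForm (b i)) ∧ Q = ∑ i, a i * b i

/-- `rank_s Q`: the minimal `r` such that `Q = ∑_{i=1}^r a_{2i-1} a_{2i}` for linear forms. -/
noncomputable def rankS {σ : Type*} (Q : MvPolynomial σ ℂ) : ℕ := sInf {r | HasRep Q r}

/-- The minimal space `MS Q`: the span of the linear forms appearing in a minimal
representation of `Q` (taken as the supremum over all minimal representations,
which coincides with any single one by well-definedness). -/
noncomputable def MS {σ : Type*} (Q : MvPolynomial σ ℂ) : Submodule ℂ (MvPolynomial σ ℂ) :=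
  ⨆ p : {ab : (Fin (rankS Q) → MvPolynomial σ ℂ) × (Fin (rankS Q) → MvPolynomial σ ℂ) //
      (∀ i, IsLinForm (ab.1 i)) ∧ (∀ i, IsLinForm (ab.2 i)) ∧ Q = ∑ i, ab.1 i * ab.2 i},
    Submodule.span ℂ (Set.range p.1.1 ∪ Set.range p.1.2)

/-- `C[V]₂`: the space of homogeneous quadratics depending only on linear forms in `V`. -/
def quadOn {σ : Type*} (V : Submodule ℂ (MvPolynomial σ ℂ)) :
    Submodule ℂ (MvPolynomial σ ℂ) :=
  Submodule.span ℂ {q | ∃ v ∈ V, ∃ w ∈ V, q = v * w}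

/-- The span of the partial derivatives. -/
def DSp {n : ℕ} (Q : MvPolynomial (Fin n) ℂ) : Submodule ℂ (MvPolynomial (Fin n) ℂ) :=
  Submodule.span ℂ (Set.range fun j => pderiv j Q)

theorem linForm_pderiv {n : ℕ} {p : MvPolynomial (Fin n) ℂ} (hp : IsLinForm p) (j : Fin n) :
    ∃ c : ℂ, pderiv j p = C c := by
  have h : (pderiv j p).IsHomogeneous 0 := IsHomogeneous.pderiv hp
  exact ⟨_, totalDegree_eq_zero_iff_eq_C.mp (by
    by_contra h0
    have : pderiv j p ≠ 0 := by
      intro h; simp [h] at h0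
    exact h0 (h.totalDegree this))⟩

theorem linForm_smul {n : ℕ} {p : MvPolynomial (Fin n) ℂ} (hp : IsLinForm p) (c : ℂ) :
    IsLinForm (c • p) := (homogeneousSubmodule (Fin n) ℂ 1).smul_mem c hp

theorem minimal_mem {n s : ℕ} {Q : MvPolynomial (Fin n) ℂ} (hs : rankS Q = s)
    (a b : Fin s → MvPolynomial (Fin n) ℂ) (ha : ∀ i, IsLinForm (a i))
    (hb : ∀ i, IsLinForm (b i)) (hQ : Q = ∑ i, a i * b i) (i₀ : Fin s) :
    a i₀ ∈ DSp Q := by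
  by_contra hmem
  obtain ⟨g, hg, hD⟩ := Submodule.exists_le_ker_of_notMem hmem
  obtain ⟨f, hf1, hf⟩ : ∃ f : MvPolynomial (Fin n) ℂ →ₗ[ℂ] ℂ, f (a i₀) = 1 ∧
      ∀ j, f (pderiv j Q) = 0 := by
    refine ⟨(g (a i₀))⁻¹ • g, by simp [hg], fun j => ?_⟩
    have : g (pderiv j Q) = 0 := hD (Submodule.subset_span ⟨j, rfl⟩)
    simp [this]
  choose ca hca using fun i j => linForm_pderiv (ha i) j
  choose cb hcb using fun i j => linForm_pderiv (hb i) j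
  have hE : ∑ i, (f (a i) • b i + f (b i) • a i) = 0 := by
    have hlin : (∑ i, (f (a i) • b i + f (b i) • a i)).IsHomogeneous 1 :=
      (homogeneousSubmodule (Fin n) ℂ 1).sum_mem fun i _ =>
        Submodule.add_mem _ (linForm_smul (hb i) _) (linForm_smul (ha i) _)
    have h1 := hlin.sum_X_mul_pderiv
    rw [one_smul] at h1
    rw [← h1]
    refine Finset.sum_eq_zero fun j _ => ?_
    have h2 : pderiv j (∑ i, (f (a i) • b i + f (b i) • a i)) = C (f (pderiv j Q)) := by
      rw [hQ]
      simp only [map_sum, Derivation.map_smul, map_add, Derivation.leibniz, hca, hcb, smul_eq_mul]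
      refine Finset.sum_congr rfl fun i _ => ?_
      rw [mul_comm (a i), mul_comm (b i), ← smul_eq_C_mul, ← smul_eq_C_mul, f.map_smul, f.map_smul]
      simp only [smul_eq_mul, map_mul, smul_eq_C_mul]
      ring
    rw [h2, hf]; simp
  have hE2 : ∑ i, f (a i) * f (b i) = 0 := by
    have := congrArg f hE
    simp only [map_sum, map_add, map_smul, smul_eq_mul, map_zero] at this
    have h3 : 2 * ∑ i, f (a i) * f (b i) = 0 := by
      rw [← this, Finset.mul_sum]
      exact Finset.sum_congr rfl fun i _ => by ring
    simpa using h3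
  have hnew : Q = ∑ i, (a i - f (a i) • a i₀) * (b i - f (b i) • a i₀) := by
    have h4 : ∑ i, (a i - f (a i) • a i₀) * (b i - f (b i) • a i₀)
        = ∑ i, a i * b i - a i₀ * ∑ i, (f (a i) • b i + f (b i) • a i)
          + (a i₀) ^ 2 * C (∑ i, f (a i) * f (b i)) := by
      rw [map_sum, Finset.mul_sum, Finset.mul_sum, ← Finset.sum_sub_distrib,
        ← Finset.sum_add_distrib]
      refine Finset.sum_congr rfl fun i _ => ?_
      simp only [smul_eq_C_mul, map_mul]
      ring
    rw [h4, hE, hE2, ← hQ]; simp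
  obtain _ | k := s
  · exact i₀.elim0
  have hrep : HasRep Q k := by
    refine ⟨fun i => a (i₀.succAbove i) - f (a (i₀.succAbove i)) • a i₀,
      fun i => b (i₀.succAbove i) - f (b (i₀.succAbove i)) • a i₀, fun i => ?_, fun i => ?_, ?_⟩
    · exact Submodule.sub_mem (homogeneousSubmodule (Fin n) ℂ 1) (ha _) (linForm_smul (ha _) _)
    · exact Submodule.sub_mem (homogeneousSubmodule (Fin n) ℂ 1) (hb _) (linForm_smul (ha _) _)
    · conv_lhs => rw [hnew]
      rw [Fin.sum_univ_succAbove _ i₀, hf1]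
      simp
  have : rankS Q ≤ k := Nat.sInf_le hrep
  omega

theorem MS_le_DSp {n : ℕ} (Q : MvPolynomial (Fin n) ℂ) : MS Q ≤ DSp Q := by
  refine iSup_le ?_
  rintro ⟨⟨a, b⟩, ha, hb, hQ⟩
  refine Submodule.span_le.mpr (Set.union_subset ?_ ?_)
  · rintro _ ⟨i, rfl⟩
    exact minimal_mem rfl a b ha hb hQ i
  · rintro _ ⟨i, rfl⟩
    exact minimal_mem rfl b a hb ha (hQ.trans (Finset.sum_congr rfl fun i _ => mul_comm _ _)) i

theorem finrank_DSp {n r : ℕ} {Q : MvPolynomial (Fin n) ℂ} (h : HasRep Q r) :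
    Module.finrank ℂ (DSp Q) ≤ 2 * r := by
  obtain ⟨a, b, ha, hb, hQ⟩ := h
  have hle : DSp Q ≤ Submodule.span ℂ (Set.range (Sum.elim a b)) := by
    refine Submodule.span_le.mpr ?_
    rintro _ ⟨j, rfl⟩
    simp only [hQ, map_sum, Derivation.leibniz, smul_eq_mul]
    refine Submodule.sum_mem _ fun i _ => ?_
    obtain ⟨c, hc⟩ := linForm_pderiv (ha i) j
    obtain ⟨d, hd⟩ := linForm_pderiv (hb i) j
    rw [hc, hd, mul_comm (a i), mul_comm (b i), ← smul_eq_C_mul, ← smul_eq_C_mul]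
    exact Submodule.add_mem _ (Submodule.smul_mem _ _ (Submodule.subset_span ⟨Sum.inl i, rfl⟩))
      (Submodule.smul_mem _ _ (Submodule.subset_span ⟨Sum.inr i, rfl⟩))
  haveI : Module.Finite ℂ (Submodule.span ℂ (Set.range (Sum.elim a b))) :=
    Module.Finite.span_of_finite ℂ (Set.finite_range _)
  refine (Submodule.finrank_mono hle).trans ((finrank_range_le_card _).trans ?_)
  simp [two_mul]

theorem DSp_lin {n : ℕ} {Q : MvPolynomial (Fin n) ℂ} (h : Q.IsHomogeneous 2) :
    DSp Q ≤ homogeneousSubmodule (Fin n) ℂ 1 := by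
  refine Submodule.span_le.mpr ?_
  rintro _ ⟨j, rfl⟩
  exact h.pderiv

theorem DSp_comb {n : ℕ} (P R : MvPolynomial (Fin n) ℂ) (x y : ℂ) :
    DSp (x • P + y • R) ≤ DSp P ⊔ DSp R := by
  refine Submodule.span_le.mpr ?_
  rintro _ ⟨j, rfl⟩
  simp only [map_add, Derivation.map_smul]
  exact Submodule.add_mem_sup (Submodule.smul_mem _ _ (Submodule.subset_span ⟨j, rfl⟩))
    (Submodule.smul_mem _ _ (Submodule.subset_span ⟨j, rfl⟩))

theorem two_gen (G : Set (ℂ × ℂ)) (h0 : (0, 0) ∈ G) :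
    ∃ p ∈ G, ∃ q ∈ G, ∀ g ∈ G, ∃ x y : ℂ, g = x • p + y • q := by
  by_cases h : ∃ p ∈ G, ∃ q ∈ G, p.1 * q.2 - p.2 * q.1 ≠ 0
  · obtain ⟨p, hp, q, hq, hd⟩ := h
    refine ⟨p, hp, q, hq, fun g _ => ⟨(g.1 * q.2 - g.2 * q.1) / (p.1 * q.2 - p.2 * q.1),
      (p.1 * g.2 - p.2 * g.1) / (p.1 * q.2 - p.2 * q.1), ?_⟩⟩
    ext
    · simp only [Prod.fst_add, Prod.smul_fst, smul_eq_mul]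
      rw [div_mul_eq_mul_div, div_mul_eq_mul_div, ← add_div, eq_div_iff hd]
      ring
    · simp only [Prod.snd_add, Prod.smul_snd, smul_eq_mul]
      rw [div_mul_eq_mul_div, div_mul_eq_mul_div, ← add_div, eq_div_iff hd]
      ring
  push Not at h
  by_cases h1 : ∃ p ∈ G, p ≠ (0, 0)
  · obtain ⟨p, hp, hne⟩ := h1
    refine ⟨p, hp, p, hp, fun g hg => ?_⟩
    have hd := h p hp g hg
    by_cases hp1 : p.1 = 0
    · have hp2 : p.2 ≠ 0 := fun h2 => hne (Prod.ext hp1 h2)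
      refine ⟨g.2 / p.2, 0, ?_⟩
      have : g.1 = 0 := by
        rw [hp1] at hd
        simpa [hp2] using hd
      ext <;> simp [hp1, hp2, this]
    · refine ⟨g.1 / p.1, 0, ?_⟩
      ext
      · simp [hp1]
      · simp only [Prod.snd_add, Prod.smul_snd, smul_eq_mul, zero_mul, add_zero]
        field_simp
        linear_combination hd
  · push Not at h1
    exact ⟨_, h0, _, h0, fun g hg => ⟨0, 0, by rw [h1 g hg]; simp⟩⟩

theorem HasRep.mono {n k r : ℕ} {Q : MvPolynomial (Fin n) ℂ} (h : HasRep Q k) (hk : k ≤ r) :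
    HasRep Q r := by
  obtain ⟨m, rfl⟩ := Nat.exists_eq_add_of_le hk
  obtain ⟨a, b, ha, hb, hQ⟩ := h
  have hz : IsLinForm (0 : MvPolynomial (Fin n) ℂ) := isHomogeneous_zero _ _ _
  refine ⟨Fin.append a fun _ => 0, Fin.append b fun _ => 0, fun i => ?_, fun i => ?_, ?_⟩
  · refine Fin.addCases (fun i => ?_) (fun i => ?_) i
    · simpa using ha i
    · simpa using hz
  · refine Fin.addCases (fun i => ?_) (fun i => ?_) i
    · simpa using hb i
    · simpa using hz
  · simp [Fin.sum_univ_add, hQ]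

/-- for quadratics `Q, Q'` and `r : ℕ` there is a space `V` of linear forms,
`dim V ≤ 8r`, containing the minimal space of every combination `αQ + βQ'` of rank ≤ r. -/
theorem stmt_6 {n : ℕ} (Q Q' : MvPolynomial (Fin n) ℂ)
    (hQ : Q.IsHomogeneous 2) (hQ' : Q'.IsHomogeneous 2) (r : ℕ) :
    ∃ V : Submodule ℂ (MvPolynomial (Fin n) ℂ),
      (∀ v ∈ V, IsLinForm v) ∧ Module.finrank ℂ V ≤ 8 * r ∧
      ∀ α β : ℂ, rankS (α • Q + β • Q') ≤ r → MS (α • Q + β • Q') ≤ V := by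
  obtain ⟨p, hp, q, hq, hall⟩ := two_gen {g | HasRep (g.1 • Q + g.2 • Q') r}
    (HasRep.mono (k := 0) ⟨fun _ => 0, fun _ => 0, fun i => i.elim0, fun i => i.elim0, by simp⟩
      (Nat.zero_le r))
  have hhom : ∀ x y : ℂ, (x • Q + y • Q').IsHomogeneous 2 := fun x y =>
    Submodule.add_mem (homogeneousSubmodule (Fin n) ℂ 2)
      (Submodule.smul_mem _ _ hQ) (Submodule.smul_mem _ _ hQ')
  refine ⟨DSp (p.1 • Q + p.2 • Q') ⊔ DSp (q.1 • Q + q.2 • Q'), fun v hv => ?_, ?_, ?_⟩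
  · exact sup_le (DSp_lin (hhom _ _)) (DSp_lin (hhom _ _)) hv
  · have h1 := finrank_DSp hp
    have h2 := finrank_DSp hq
    haveI : ∀ P : MvPolynomial (Fin n) ℂ, Module.Finite ℂ (DSp P) := fun P =>
      Module.Finite.span_of_finite ℂ (Set.finite_range _)
    have h3 := Submodule.finrank_add_le_finrank_add_finrank
      (DSp (p.1 • Q + p.2 • Q')) (DSp (q.1 • Q + q.2 • Q'))
    omega
  · intro α β hr
    by_cases hne : ∃ k, HasRep (α • Q + β • Q') k
    · have hrep : HasRep (α • Q + β • Q') r :=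
        HasRep.mono (Nat.sInf_mem (s := {k | HasRep (α • Q + β • Q') k}) hne) hr
      obtain ⟨x, y, hxy⟩ := hall (α, β) hrep
      have e1 : α = x * p.1 + y * q.1 := congrArg Prod.fst hxy
      have e2 : β = x * p.2 + y * q.2 := congrArg Prod.snd hxy
      have e : α • Q + β • Q' = x • (p.1 • Q + p.2 • Q') + y • (q.1 • Q + q.2 • Q') := by
        rw [e1, e2]; module
      refine (MS_le_DSp _).trans ?_
      rw [e]
      exact DSp_comb _ _ _ _
    · refine iSup_le ?_
      rintro ⟨⟨a, b⟩, hab⟩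
      exact absurd ⟨_, a, b, hab⟩ hne
end
end

section
/- Let A, B, C be n-variate homogeneous quadratic polynomials over C such that C vanishes at every common zero of A and B (equivalently C ∈ \sqrt{⟨A,B⟩}). Then at least one of the following holds: (i) C is in the linear span of A and B; (ii) there exists a nontrivial linear combination αA + βB equal to ℓ^2 for some linear form ℓ; (iii) there exist two linear forms ℓ_1 and ℓ_2 such that A, B, C all lie in the ideal ⟨ℓ_1, ℓ_2⟩. -/
open MvPolynomial

noncomputable section

namespace S11

abbrev Pol (n : ℕ) := MvPolynomial (Fin n) ℂ

section graded
attribute [local instance] MvPolynomial.gradedAlgebra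

lemma hc_mul {n : ℕ} {i j : ℕ} {f g : Pol n} (hf : f.IsHomogeneous i) :
    homogeneousComponent (i + j) (f * g) = f * homogeneousComponent j g := by
  have := DirectSum.coe_decompose_mul_add_of_left_mem (homogeneousSubmodule (Fin n) ℂ)
    (i := i) (j := j) (a := f) (b := g) hf
  have h : ∀ (φ : Pol n) (k : ℕ), ((DirectSum.decompose (homogeneousSubmodule (Fin n) ℂ) φ k :
      homogeneousSubmodule (Fin n) ℂ k) : Pol n) = homogeneousComponent k φ := fun φ k =>
    decomposition.decompose'_apply φ k
  rw [h, h] at this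
  exact this

end graded

lemma hc_self {n : ℕ} {i : ℕ} {f : Pol n} (hf : f.IsHomogeneous i) :
    homogeneousComponent i f = f := homogeneousComponent_eq_self hf

lemma dvd_hom {n : ℕ} {i j : ℕ} {f g : Pol n} (hf : f.IsHomogeneous i)
    (hg : g.IsHomogeneous (i + j)) (h : f ∣ g) :
    ∃ q : Pol n, q.IsHomogeneous j ∧ g = f * q := by
  obtain ⟨q, rfl⟩ := h
  refine ⟨homogeneousComponent j q, homogeneousComponent_isHomogeneous _ _, ?_⟩
  rw [← hc_mul hf, hc_self hg]

lemma mem_pair_hom {n : ℕ} {i j : ℕ} {f g h : Pol n} (hf : f.IsHomogeneous i)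
    (hg : g.IsHomogeneous i) (hh : h.IsHomogeneous (i + j))
    (hm : h ∈ Ideal.span {f, g}) :
    ∃ q r : Pol n, q.IsHomogeneous j ∧ r.IsHomogeneous j ∧ h = f * q + g * r := by
  obtain ⟨q, r, hqr⟩ := Ideal.mem_span_pair.1 hm
  refine ⟨homogeneousComponent j q, homogeneousComponent j r,
    homogeneousComponent_isHomogeneous _ _, homogeneousComponent_isHomogeneous _ _, ?_⟩
  rw [← hc_mul hf, ← hc_mul hg, ← map_add, mul_comm f, mul_comm g, hqr, hc_self hh]

lemma hom0 {n : ℕ} {f : Pol n} (hf : f.IsHomogeneous 0) : ∃ c : ℂ, f = C c := by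
  refine ⟨coeff 0 f, ?_⟩
  rw [← homogeneousComponent_zero, hc_self hf]

lemma deg_one_split {n : ℕ} {f : Pol n} (hf : f.totalDegree = 1) :
    f = C (coeff 0 f) + homogeneousComponent 1 f := by
  conv_lhs => rw [← sum_homogeneousComponent f, hf]
  simp [Finset.sum_range_succ]

/-- a non-squarefree nonzero cubic is divisible by the square of a linear form -/
lemma not_sqfree {n : ℕ} {R : Pol n} (hR : R.IsHomogeneous 3) (h0 : R ≠ 0)
    (hs : ¬ Squarefree R) : ∃ l m : Pol n, l.IsHomogeneous 1 ∧ m.IsHomogeneous 1 ∧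
      l ≠ 0 ∧ R = l * (l * m) := by
  unfold Squarefree at hs
  push Not at hs
  obtain ⟨f, ⟨m, hm⟩, hu⟩ := hs
  have hf0 : f ≠ 0 := by rintro rfl; simp at hm; exact h0 hm
  have hm0 : m ≠ 0 := by rintro rfl; simp at hm; exact h0 hm
  have hd : R.totalDegree = 3 := hR.totalDegree h0
  rw [hm, totalDegree_mul_of_isDomain (mul_ne_zero hf0 hf0) hm0,
    totalDegree_mul_of_isDomain hf0 hf0] at hd
  have hfd : f.totalDegree ≠ 0 := by
    intro h
    obtain ⟨c, rfl⟩ := hom0 ((totalDegree_zero_iff_isHomogeneous _).1 h)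
    apply hu
    have : c ≠ 0 := by rintro rfl; simp at hf0
    exact (IsUnit.mk0 c this).map C
  have hf1 : f.totalDegree = 1 := by omega
  have hm1 : m.totalDegree = 1 := by omega
  set g := homogeneousComponent 1 f with hg
  have hgh : g.IsHomogeneous 1 := homogeneousComponent_isHomogeneous _ _
  have key : R = g * (g * homogeneousComponent 1 m) := by
    have hsplit := deg_one_split hf1
    rw [← hg] at hsplit
    set c := coeff 0 f
    have e : R = g * (g * m) + (C (2 * c)) * (g * m) + C (c * c) * m := by
      rw [hm, hsplit]; simp only [C_mul]; rw [show (C (2:ℂ) : Pol n) = 2 from rfl]; ring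
    rw [← hc_self hR]
    conv_lhs => rw [e]
    rw [map_add, map_add, homogeneousComponent_C_mul, homogeneousComponent_C_mul,
      show 3 = 1 + 2 from rfl, hc_mul hgh, hc_mul hgh, show 2 = 1 + 1 from rfl, hc_mul hgh,
      homogeneousComponent_eq_zero (1 + 1) m (by omega),
      homogeneousComponent_eq_zero (1 + (1 + 1)) m (by omega)]
    simp
  refine ⟨g, _, hgh, homogeneousComponent_isHomogeneous 1 m, ?_, key⟩
  intro h
  rw [h] at key; simp at key; exact h0 key

/-! kernels -/

lemma sub_mem_of_X {n : ℕ} (I : Ideal (Pol n)) (φ : Pol n →ₐ[ℂ] Pol n)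
    (h : ∀ i, X i - φ (X i) ∈ I) (f : Pol n) : f - φ f ∈ I := by
  have : (Ideal.Quotient.mkₐ ℂ I) = (Ideal.Quotient.mkₐ ℂ I).comp φ := by
    apply MvPolynomial.algHom_ext
    intro i
    exact Ideal.Quotient.eq.2 (h i)
  exact Ideal.Quotient.eq.1 (DFunLike.congr_fun this f)

lemma lin_eq {n : ℕ} {l : Pol n} (hl : l.IsHomogeneous 1) :
    ∃ w : Fin n → ℂ, l = ∑ i, C (w i) * X i := by
  have h : l ∈ homogeneousSubmodule (Fin n) ℂ 1 := hl
  rw [homogeneousSubmodule_one_eq_span_X] at h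
  obtain ⟨w, hw⟩ := (Submodule.mem_span_range_iff_exists_fun ℂ).1 h
  exact ⟨w, by rw [← hw]; simp [smul_eq_C_mul]⟩

lemma ker1 {n : ℕ} {l : Pol n} (hl : l.IsHomogeneous 1) :
    ∃ φ : Pol n →ₐ[ℂ] Pol n, φ l = 0 ∧ (∀ f, f - φ f ∈ Ideal.span {l}) ∧
      (∀ f : Pol n, f.IsHomogeneous 1 → (φ f).IsHomogeneous 1) := by
  by_cases h0 : l = 0
  · exact ⟨AlgHom.id _ _, by simp [h0], by simp, by simp⟩
  obtain ⟨w, hw⟩ := lin_eq hl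
  have : ∃ j, w j ≠ 0 := by
    by_contra! h
    exact h0 (by simp [hw, h])
  obtain ⟨j, hj⟩ := this
  let φ : Pol n →ₐ[ℂ] Pol n := aeval (fun i => X i - if i = j then C (w j)⁻¹ * l else 0)
  have hX : ∀ i, φ (X i) = X i - if i = j then C (w j)⁻¹ * l else 0 := fun i => by simp [φ]
  have hC : ∀ c, φ (C c) = C c := fun c => by simp [φ, algebraMap_eq]
  refine ⟨φ, ?_, ?_, ?_⟩
  · conv_lhs => rw [hw]
    rw [map_sum]
    simp only [map_mul, hX, hC, mul_sub, Finset.sum_sub_distrib]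
    rw [← hw]
    simp only [mul_ite, mul_zero, Finset.sum_ite_eq', Finset.mem_univ, if_true]
    rw [← mul_assoc, ← C_mul, mul_inv_cancel₀ hj]; simp
  · apply sub_mem_of_X
    intro i
    rw [hX, sub_sub_cancel]
    split_ifs
    · exact Ideal.mul_mem_left _ _ (Ideal.mem_span_singleton_self l)
    · exact Ideal.zero_mem _
  · intro f hf
    have := hf.aeval (n := 1) (fun i => X i - if i = j then C (w j)⁻¹ * l else 0) (by
      intro i
      apply (isHomogeneous_X ℂ i).sub
      split_ifs
      · exact hl.C_mul _
      · exact isHomogeneous_zero _ _ _)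
    simpa [φ] using this

lemma prime_lin {n : ℕ} {l : Pol n} (hl : l.IsHomogeneous 1) (h0 : l ≠ 0) : Prime l := by
  rw [← Ideal.span_singleton_prime h0]
  obtain ⟨φ, h1, h2, -⟩ := ker1 hl
  have : Ideal.span {l} = RingHom.ker φ := by
    apply le_antisymm
    · rw [Ideal.span_singleton_le_iff_mem]; exact h1
    · intro f hf
      have := h2 f
      rwa [show φ f = 0 from hf, sub_zero] at this
  rw [this]
  exact RingHom.ker_isPrime _

lemma prime_pair {n : ℕ} {l k : Pol n} (hl : l.IsHomogeneous 1) (hk : k.IsHomogeneous 1) :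
    (Ideal.span {l, k}).IsPrime := by
  obtain ⟨φ, h1, h2, h3⟩ := ker1 hl
  obtain ⟨ψ, g1, g2, -⟩ := ker1 (h3 k hk)
  have hle : Ideal.span {l} ≤ Ideal.span {l, k} := Ideal.span_mono (by simp)
  have hlm : l ∈ Ideal.span {l, k} := Ideal.subset_span (by simp)
  have hkm : k ∈ Ideal.span {l, k} := Ideal.subset_span (by simp)
  have hle2 : Ideal.span {φ k} ≤ Ideal.span {l, k} := by
    rw [Ideal.span_singleton_le_iff_mem]
    have := sub_mem hkm (hle (h2 k))
    simpa using this
  have : Ideal.span {l, k} = RingHom.ker (ψ.comp φ) := by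
    apply le_antisymm
    · rw [Ideal.span_le]
      rintro x (rfl | rfl)
      · change ψ (φ _) = 0
        rw [h1, map_zero]
      · exact g1
    · intro f hf
      have a1 := hle (h2 f)
      have a2 := hle2 (g2 (φ f))
      rw [show ψ (φ f) = 0 from hf, sub_zero] at a2
      have := add_mem a1 a2
      simpa using this
  rw [this]
  exact RingHom.ker_isPrime _

end S11

namespace S11

section geom
variable {E : Type*} [AddCommGroup E] [Module ℂ E]

lemma quad_root (a b c : ℂ) (ha : a ≠ 0) : ∃ s : ℂ, a * (s * s) + b * s + c = 0 := by
  apply exists_quadratic_eq_zero ha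
  obtain ⟨z, hz⟩ := IsAlgClosed.exists_pow_nat_eq (discrim a b c) (n := 2) (by norm_num)
  exact ⟨z, by rw [← hz, sq]⟩

/-- forms whose isotropic vectors are in the kernel are squares -/
lemma sq_form (f : E →ₗ[ℂ] E →ₗ[ℂ] ℂ) (hf : ∀ x y, f x y = f y x)
    (h : ∀ x, f x x = 0 → f x = 0) : ∃ l : E →ₗ[ℂ] ℂ, ∀ x, f x x = l x ^ 2 := by
  by_cases h0 : ∀ u, f u u = 0
  · exact ⟨0, fun x => by simp [h0]⟩
  push Not at h0
  obtain ⟨u, hu⟩ := h0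
  obtain ⟨z, hz⟩ := IsAlgClosed.exists_pow_nat_eq (f u u) (n := 2) (by norm_num)
  have hz0 : z ≠ 0 := by rintro rfl; simp at hz; exact hu hz.symm
  refine ⟨z⁻¹ • f u, fun x => ?_⟩
  obtain ⟨s, hs⟩ := quad_root (f u u) (-2 * f u x) (f x x) hu
  have h1 : f (x - s • u) (x - s • u) = 0 := by
    simp only [map_sub, map_smul, LinearMap.sub_apply, LinearMap.smul_apply, smul_eq_mul]
    rw [hf x u]; linear_combination hs
  have h2 := h _ h1
  have h3 : f (x - s • u) u = 0 := by rw [h2]; rfl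
  simp only [map_sub, map_smul, LinearMap.sub_apply, LinearMap.smul_apply, smul_eq_mul] at h3
  rw [hf x u] at h3
  simp only [LinearMap.smul_apply, smul_eq_mul]
  have h4 : f u x = s * z ^ 2 := by rw [hz]; linear_combination h3
  have h5 : f x x = (s * z) ^ 2 := by
    rw [← hz, h4] at hs; linear_combination hs
  rw [h4, h5]; field_simp

/-- there is a member of the pencil with kernel bigger than the common kernel -/
lemma exists_ker [FiniteDimensional ℂ E] (f g : E →ₗ[ℂ] E →ₗ[ℂ] ℂ)
    (hf : ∀ x y, f x y = f y x) (hg : ∀ x y, g x y = g y x)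
    (hne : f ≠ 0) : ∃ (α β : ℂ) (v : E), (α, β) ≠ (0, 0) ∧ α • f v + β • g v = 0 ∧
      ¬ (f v = 0 ∧ g v = 0) := by
  let K : Submodule ℂ E := LinearMap.ker f ⊓ LinearMap.ker g
  obtain ⟨W, hW⟩ := Submodule.exists_isCompl K
  have hKf : ∀ k ∈ K, f k = 0 := fun k hk => hk.1
  have hKg : ∀ k ∈ K, g k = 0 := fun k hk => hk.2
  have hWK : ∀ w ∈ W, f w = 0 → g w = 0 → w = 0 := by
    intro w hw h1 h2
    have := (Submodule.disjoint_def.1 hW.disjoint) w ⟨h1, h2⟩ hw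
    exact this
  have hdec : ∀ x : E, ∃ k ∈ K, ∃ w ∈ W, k + w = x := fun x =>
    Submodule.mem_sup.1 (by rw [hW.sup_eq_top]; trivial)
  -- restrictions
  let fW : W →ₗ[ℂ] Module.Dual ℂ W := (LinearMap.lcomp ℂ ℂ W.subtype) ∘ₗ f ∘ₗ W.subtype
  let gW : W →ₗ[ℂ] Module.Dual ℂ W := (LinearMap.lcomp ℂ ℂ W.subtype) ∘ₗ g ∘ₗ W.subtype
  have ext : ∀ (α β : ℂ) (v : W), α • fW v + β • gW v = 0 →
      α • f (v : E) + β • g (v : E) = 0 := by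
    intro α β v h
    ext x
    obtain ⟨k, hk, w, hw, rfl⟩ := hdec x
    have := LinearMap.congr_fun h ⟨w, hw⟩
    simp [fW, gW] at this
    simp only [LinearMap.add_apply, LinearMap.smul_apply, map_add, smul_eq_mul,
      LinearMap.zero_apply]
    rw [hf v k, hg v k, hKf k hk, hKg k hk]
    simpa using this
  have hnt : ∃ v : W, v ≠ 0 := by
    by_contra! h
    apply hne
    ext x
    obtain ⟨k, hk, w, hw, rfl⟩ := hdec x
    have : w = 0 := congrArg Subtype.val (h ⟨w, hw⟩)
    simp [this, hKf k hk]
  have fin : ∀ (α β : ℂ) (v : W), v ≠ 0 → (α, β) ≠ (0, 0) → α • fW v + β • gW v = 0 →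
      ∃ (α β : ℂ) (v : E), (α, β) ≠ (0, 0) ∧ α • f v + β • g v = 0 ∧
      ¬ (f v = 0 ∧ g v = 0) := by
    intro α β v hv hab h
    refine ⟨α, β, v, hab, ext α β v h, ?_⟩
    rintro ⟨h1, h2⟩
    exact hv (Subtype.ext (hWK v v.2 h1 h2))
  by_cases hinj : ∀ v : W, gW v = 0 → v = 0
  · have hi : Function.Injective gW := (injective_iff_map_eq_zero gW).2 hinj
    let e := LinearEquiv.ofInjectiveOfFinrankEq gW hi (Subspace.dual_finrank_eq).symm
    obtain ⟨v0, hv0⟩ := hnt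
    have : Nontrivial W := ⟨v0, 0, hv0⟩
    obtain ⟨c, hc⟩ := Module.End.exists_eigenvalue (K := ℂ) (V := W) (e.symm.toLinearMap ∘ₗ fW)
    obtain ⟨v, hv⟩ := hc.exists_hasEigenvector
    have h1 := hv.apply_eq_smul
    have h2 : fW v = c • gW v := by
      have := congrArg e h1
      rw [map_smul] at this
      change e (e.symm (fW v)) = c • gW v at this
      rwa [e.apply_symm_apply] at this
    exact fin 1 (-c) v hv.2 (by simp) (by rw [h2]; simp)
  · push Not at hinj
    obtain ⟨v, h1, h2⟩ := hinj
    exact fin 0 1 v h2 (by simp) (by simp [h1])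

/-- Case with a distinguished singular point. -/
lemma sing_case (f g : E →ₗ[ℂ] E →ₗ[ℂ] ℂ)
    (hf : ∀ x y, f x y = f y x) (hg : ∀ x y, g x y = g y x)
    (hs : ∀ p, f p p = 0 → g p p = 0 → ∃ α β : ℂ, (α, β) ≠ (0, 0) ∧ α • f p + β • g p = 0)
    (p : E) (hfp : f p p = 0) (hgp : g p = 0) (hfp0 : f p ≠ 0) :
    ∃ l : E →ₗ[ℂ] ℂ, ∀ x, g x x = l x ^ 2 := by
  have h1 : ∀ y, g y y = 0 → f p y ≠ 0 → g y = 0 := by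
    intro y hy hpy
    obtain ⟨s, hs1⟩ : ∃ s : ℂ, f y y + 2 * s * f p y = 0 := ⟨- f y y / (2 * f p y), by
      field_simp; ring⟩
    have hgy : g (y + s • p) = g y := by simp [hgp]
    have z1 : f (y + s • p) (y + s • p) = 0 := by
      simp only [map_add, map_smul, LinearMap.add_apply, LinearMap.smul_apply, smul_eq_mul, hfp]
      rw [hf y p]; linear_combination hs1
    have z2 : g (y + s • p) (y + s • p) = 0 := by
      rw [hgy, map_add, map_smul, hg y p, hgp, hy]; simp
    obtain ⟨α, β, hab, h⟩ := hs _ z1 z2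
    rw [hgy] at h
    have e := LinearMap.congr_fun h p
    simp only [map_add, map_smul, LinearMap.add_apply, LinearMap.smul_apply, smul_eq_mul, hfp,
      hg y p, hgp, LinearMap.zero_apply] at e
    rw [hf y p] at e
    have hα : α = 0 := by
      have : α * f p y = 0 := by linear_combination e
      exact (mul_eq_zero.1 this).resolve_right hpy
    subst hα
    have hβ : β ≠ 0 := by rintro rfl; simp at hab
    simpa [hβ] using h
  apply sq_form g hg
  intro y hy
  by_contra hgy
  by_cases hpy : f p y = 0
  swap
  · exact hgy (h1 y hy hpy)
  -- w with g y w ≠ 0 and f p w ≠ 0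
  have : ∃ w, g y w ≠ 0 ∧ f p w ≠ 0 := by
    obtain ⟨w1, hw1⟩ : ∃ w, g y w ≠ 0 := by
      by_contra! h; exact hgy (LinearMap.ext h)
    obtain ⟨w2, hw2⟩ : ∃ w, f p w ≠ 0 := by
      by_contra! h; exact hfp0 (LinearMap.ext h)
    by_cases c1 : f p w1 = 0
    · by_cases c2 : g y w2 = 0
      · exact ⟨w1 + w2, by simp [c2, hw1], by simp [c1, hw2]⟩
      · exact ⟨w2, c2, hw2⟩
    · exact ⟨w1, hw1, c1⟩
  obtain ⟨w, hw1, hw2⟩ := this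
  obtain ⟨s, hs1⟩ : ∃ s : ℂ, g w w + 2 * s * g y w = 0 := ⟨- g w w / (2 * g y w), by
      field_simp; ring⟩
  have z1 : g (w + s • y) (w + s • y) = 0 := by
    simp only [map_add, map_smul, LinearMap.add_apply, LinearMap.smul_apply, smul_eq_mul, hy]
    rw [hg w y]; linear_combination hs1
  have z2 := h1 _ z1 (by simp [hpy, hw2])
  have z3 := LinearMap.congr_fun z2 y
  simp [hy, hg w y] at z3
  exact hw1 z3

lemma geom [FiniteDimensional ℂ E] (f g : E →ₗ[ℂ] E →ₗ[ℂ] ℂ)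
    (hf : ∀ x y, f x y = f y x) (hg : ∀ x y, g x y = g y x) :
    (∃ (α β : ℂ) (l : E →ₗ[ℂ] ℂ), (α, β) ≠ (0, 0) ∧ ∀ x, α * f x x + β * g x x = l x ^ 2) ∨
    ∃ p, f p p = 0 ∧ g p p = 0 ∧ ∀ α β : ℂ, α • f p + β • g p = 0 → α = 0 ∧ β = 0 := by
  by_cases hs : ∀ p, f p p = 0 → g p p = 0 → ∃ α β : ℂ, (α, β) ≠ (0, 0) ∧ α • f p + β • g p = 0
  swap
  · right
    push Not at hs
    obtain ⟨p, h1, h2, h3⟩ := hs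
    refine ⟨p, h1, h2, fun α β h => ?_⟩
    by_contra hc
    exact h3 α β (by simpa using hc) h
  left
  -- change of basis: sing_case for arbitrary basis of the pencil
  have main : ∀ (α β γ δ : ℂ), α * δ - β * γ ≠ 0 → ∀ p, f p p = 0 → g p p = 0 →
      (γ • f + δ • g) p = 0 → (α • f + β • g) p ≠ 0 →
      ∃ l : E →ₗ[ℂ] ℂ, ∀ x, (γ • f + δ • g) x x = l x ^ 2 := by
    intro α β γ δ hD p h1 h2 h3 h4
    refine sing_case (α • f + β • g) (γ • f + δ • g) ?_ ?_ ?_ p ?_ h3 h4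
    · intro x y; simp [hf x y, hg x y]
    · intro x y; simp [hf x y, hg x y]
    · intro q hq1 hq2
      simp at hq1 hq2
      have e1 : (α * δ - β * γ) * f q q = 0 := by linear_combination δ * hq1 - β * hq2
      have e2 : (α * δ - β * γ) * g q q = 0 := by linear_combination α * hq2 - γ * hq1
      obtain ⟨s, t, hst, h⟩ := hs q ((mul_eq_zero.1 e1).resolve_left hD)
        ((mul_eq_zero.1 e2).resolve_left hD)
      -- s f + t g = u (αf+βg) + v(γf+δg)
      refine ⟨s * δ - t * γ, t * α - s * β, ?_, ?_⟩
      · intro hc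
        simp only [Prod.mk.injEq] at hc
        apply hst
        have e3 : (α * δ - β * γ) * s = 0 := by linear_combination α * hc.1 + γ * hc.2
        have e4 : (α * δ - β * γ) * t = 0 := by linear_combination δ * hc.2 + β * hc.1
        rw [(mul_eq_zero.1 e3).resolve_left hD, (mul_eq_zero.1 e4).resolve_left hD]
      · have : (s * δ - t * γ) • (α • f + β • g) q + (t * α - s * β) • (γ • f + δ • g) q
          = (α * δ - β * γ) • (s • f q + t • g q) := by
          simp only [LinearMap.add_apply, LinearMap.smul_apply]
          module
        rw [this, h, smul_zero]
    · simp [h1, h2]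
  by_cases hz : ∀ p, f p p = 0 → g p p = 0 → f p = 0 ∧ g p = 0
  swap
  · push Not at hz
    obtain ⟨p, h1, h2, h3⟩ := hz
    obtain ⟨γ, δ, hgd, h⟩ := hs p h1 h2
    by_cases hfp : f p = 0
    · have hgp := h3 hfp
      obtain ⟨l, hl⟩ := main 0 1 1 0 (by simp) p h1 h2 (by simp [hfp]) (by simpa using hgp)
      exact ⟨1, 0, l, by simp, by simpa using hl⟩
    · have hδ : δ ≠ 0 := by
        rintro rfl
        simp [hfp] at h hgd
        exact hgd h
      obtain ⟨l, hl⟩ := main 1 0 γ δ (by simpa using hδ) p h1 h2 (by simpa using h)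
        (by simpa using hfp)
      exact ⟨γ, δ, l, hgd, by simpa using hl⟩
  by_cases hf0 : f = 0
  · exact ⟨1, 0, 0, by simp, by simp [hf0]⟩
  obtain ⟨α, β, v, hab, hv, hnv⟩ := exists_ker f g hf hg hf0
  have : ∃ l : E →ₗ[ℂ] ℂ, ∀ x, (α • f + β • g) x x = l x ^ 2 := by
    apply sq_form
    · intro x y; simp [hf x y, hg x y]
    · intro u hu
      -- the other form
      obtain ⟨γ, δ, hD⟩ : ∃ γ δ : ℂ, α * δ - β * γ ≠ 0 := by
        by_cases ha : α = 0
        · refine ⟨1, 0, ?_⟩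
          subst ha; simpa using hab
        · exact ⟨0, 1, by simpa using ha⟩
      have back : ∀ q, (α • f + β • g) q q = 0 → (γ • f + δ • g) q q = 0 → f q = 0 ∧ g q = 0 := by
        intro q hq1 hq2
        simp at hq1 hq2
        have e1 : (α * δ - β * γ) * f q q = 0 := by linear_combination δ * hq1 - β * hq2
        have e2 : (α * δ - β * γ) * g q q = 0 := by linear_combination α * hq2 - γ * hq1
        exact hz q ((mul_eq_zero.1 e1).resolve_left hD) ((mul_eq_zero.1 e2).resolve_left hD)
      set Q := α • f + β • g with hQ
      set P := γ • f + δ • g with hP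
      have hQv : Q v = 0 := by simpa [hQ] using hv
      have hQs : ∀ x y, Q x y = Q y x := by intro x y; simp [hQ, hf x y, hg x y]
      have hPs : ∀ x y, P x y = P y x := by intro x y; simp [hP, hf x y, hg x y]
      have hPv : P v v ≠ 0 := fun h => hnv (back v (by rw [hQv]; rfl) h)
      obtain ⟨s, hs1⟩ := quad_root (P v v) (2 * P u v) (P u u) hPv
      have z1 : Q (u + s • v) = Q u := by simp [hQv]
      have z2 : Q (u + s • v) (u + s • v) = 0 := by
        rw [z1, map_add, map_smul, hQs u v, hQv, hu]; simp
      have z3 : P (u + s • v) (u + s • v) = 0 := by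
        simp only [map_add, map_smul, LinearMap.add_apply, LinearMap.smul_apply, smul_eq_mul]
        rw [hPs v u]; linear_combination hs1
      obtain ⟨z4, z5⟩ := back _ z2 z3
      rw [← z1, hQ, LinearMap.add_apply, LinearMap.smul_apply, LinearMap.smul_apply, z4, z5]
      simp
  obtain ⟨l, hl⟩ := this
  exact ⟨α, β, l, hab, by simpa using hl⟩

end geom
end S11

namespace S11

lemma lin_fun {n : ℕ} {l : Pol n} (hl : l.IsHomogeneous 1) :
    ∃ φ : (Fin n → ℂ) →ₗ[ℂ] ℂ, ∀ x, eval x l = φ x := by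
  obtain ⟨w, rfl⟩ := lin_eq hl
  refine ⟨∑ i, w i • LinearMap.proj i, fun x => ?_⟩
  simp [LinearMap.sum_apply]

lemma to_poly {n : ℕ} (φ : (Fin n → ℂ) →ₗ[ℂ] ℂ) :
    ∃ l : Pol n, l.IsHomogeneous 1 ∧ ∀ x, eval x l = φ x := by
  refine ⟨∑ i, C (φ (Pi.single i 1)) * X i, ?_, fun x => ?_⟩
  · exact IsHomogeneous.sum _ _ _ fun i _ => isHomogeneous_C_mul_X _ _
  · rw [LinearMap.pi_apply_eq_sum_univ φ x]
    simp only [map_sum, map_mul, eval_C, eval_X, smul_eq_mul]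
    refine Finset.sum_congr rfl fun i _ => ?_
    rw [mul_comm]
    congr 2
    ext j; simp [Pi.single_apply, eq_comm]

lemma quad_form {n : ℕ} {A : Pol n} (hA : A.IsHomogeneous 2) :
    ∃ f : (Fin n → ℂ) →ₗ[ℂ] (Fin n → ℂ) →ₗ[ℂ] ℂ, (∀ x y, f x y = f y x) ∧
      ∀ x, eval x A = f x x := by
  have h : A ∈ homogeneousSubmodule (Fin n) ℂ 2 := hA
  rw [← homogeneousSubmodule_one_pow, sq] at h
  induction h using Submodule.mul_induction_on' with
  | mem_mul_mem l hl k hk =>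
    obtain ⟨φ, hφ⟩ := lin_fun hl
    obtain ⟨ψ, hψ⟩ := lin_fun hk
    refine ⟨(1 / 2 : ℂ) • (φ.smulRight ψ + ψ.smulRight φ), fun x y => ?_, fun x => ?_⟩
    · simp; ring
    · simp [hφ, hψ]; ring
  | add P _ Q _ ih1 ih2 =>
    obtain ⟨f, f1, f2⟩ := ih1
      (by rename_i h1 h2; rw [← sq, homogeneousSubmodule_one_pow] at h1; exact h1)
    obtain ⟨g, g1, g2⟩ := ih2
      (by rename_i h1 h2; rw [← sq, homogeneousSubmodule_one_pow] at h2; exact h2)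
    exact ⟨f + g, fun x y => by simp [f1 x y, g1 x y], fun x => by simp [f2, g2]⟩

lemma subst {n : ℕ} {A D a d : Pol n} {h : (Fin n → ℂ) →ₗ[ℂ] (Fin n → ℂ) →ₗ[ℂ] ℂ}
    (hs : ∀ x y, h x y = h y x) (hD : ∀ x, eval x D = h x x) (p : Fin n → ℂ) (hp : h p p = 0)
    (hd : ∀ x, eval x d = 2 * h p x) :
    aeval (fun i => a * X i - A * C (p i)) D = a * (a * D - d * A) := by
  apply MvPolynomial.funext
  intro x
  have e : eval x (aeval (fun i => a * X i - A * C (p i)) D)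
      = eval (eval x a • x - eval x A • p) D := by
    have : (aeval x : Pol n →ₐ[ℂ] ℂ).comp (aeval (fun i => a * X i - A * C (p i)))
        = aeval (eval x a • x - eval x A • p) := by
      apply MvPolynomial.algHom_ext
      intro i
      simp [aeval_eq_eval]
    have := DFunLike.congr_fun this D
    simpa [aeval_eq_eval] using this
  rw [e, hD]
  simp only [map_sub, map_mul, hD, hd, map_smul, LinearMap.sub_apply, LinearMap.smul_apply,
    smul_eq_mul, hp, hs x p]
  ring

lemma rad_dvd {n : ℕ} {A B D a b d : Pol n}
    {f g h : (Fin n → ℂ) →ₗ[ℂ] (Fin n → ℂ) →ₗ[ℂ] ℂ}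
    (fs : ∀ x y, f x y = f y x) (gs : ∀ x y, g x y = g y x) (hs : ∀ x y, h x y = h y x)
    (hA : ∀ x, eval x A = f x x) (hB : ∀ x, eval x B = g x x) (hD : ∀ x, eval x D = h x x)
    (p : Fin n → ℂ) (fp : f p p = 0) (gp : g p p = 0) (hp : h p p = 0)
    (ha : ∀ x, eval x a = 2 * f p x) (hb : ∀ x, eval x b = 2 * g p x)
    (hd : ∀ x, eval x d = 2 * h p x)
    (hrad : D ∈ (Ideal.span {A, B}).radical) :
    ∃ N : ℕ, a * B - b * A ∣ (a * (a * D - d * A)) ^ N := by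
  obtain ⟨N, hN⟩ := hrad
  obtain ⟨u, v, huv⟩ := Ideal.mem_span_pair.1 hN
  refine ⟨N, ?_⟩
  let ψ : Pol n →ₐ[ℂ] Pol n := aeval (fun i => a * X i - A * C (p i))
  have e1 : ψ A = a * (a * A - a * A) := subst fs hA p fp ha
  have e2 : ψ B = a * (a * B - b * A) := subst gs hB p gp hb
  have e3 : ψ D = a * (a * D - d * A) := subst hs hD p hp hd
  have := congrArg ψ huv
  rw [map_add, map_mul, map_mul, map_pow, e1, e2, e3] at this
  rw [← this]
  exact ⟨ψ v * a, by ring⟩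

lemma case_sq {n : ℕ} {A B a l m : Pol n} (hB : B.IsHomogeneous 2)
    (hl : l.IsHomogeneous 1) (hl0 : l ≠ 0)
    (hla : ¬ l ∣ a) (h : a * B - l * A = l * (l * m)) :
    ∃ k : Pol n, k.IsHomogeneous 1 ∧ A ∈ Ideal.span {l, k} ∧ B ∈ Ideal.span {l, k} := by
  have hp := prime_lin hl hl0
  have h1 : l ∣ a * B := ⟨A + l * m, by linear_combination h⟩
  obtain ⟨k, hk, rfl⟩ := dvd_hom (j := 1) hl hB ((hp.dvd_or_dvd h1).resolve_left hla)
  refine ⟨k, hk, ?_, ?_⟩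
  · refine Ideal.mem_span_pair.2 ⟨-m, a, ?_⟩
    apply mul_left_cancel₀ hl0
    linear_combination h
  · exact Ideal.mem_span_pair.2 ⟨k, 0, by ring⟩

lemma alg {n : ℕ} {A B D a b d : Pol n} (hA : A.IsHomogeneous 2) (hB : B.IsHomogeneous 2)
    (hD : D.IsHomogeneous 2) (ha : a.IsHomogeneous 1) (hb : b.IsHomogeneous 1)
    (hd : d.IsHomogeneous 1)
    (hi : ∀ s t : ℂ, C s * a + C t * b = 0 → s = 0 ∧ t = 0)
    (h1 : ∃ N : ℕ, a * B - b * A ∣ (a * (a * D - d * A)) ^ N)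
    (h2 : ∃ N : ℕ, b * A - a * B ∣ (b * (b * D - d * B)) ^ N) :
    (∃ s t : ℂ, D = C s * A + C t * B) ∨
    ∃ l k : Pol n, l.IsHomogeneous 1 ∧ k.IsHomogeneous 1 ∧ A ∈ Ideal.span {l, k} ∧
      B ∈ Ideal.span {l, k} := by
  have ha0 : a ≠ 0 := by
    rintro rfl; simpa using hi 1 0 (by simp)
  have hb0 : b ≠ 0 := by
    rintro rfl; simpa using hi 0 1 (by simp)
  have pa := prime_lin ha ha0
  have pb := prime_lin hb hb0
  have hab : ¬ a ∣ b := by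
    intro h
    obtain ⟨q, hq, e⟩ := dvd_hom (j := 0) ha hb h
    obtain ⟨c, rfl⟩ := hom0 hq
    have := (hi c (-1) (by rw [e]; simp; ring)).2
    simp at this
  have hba : ¬ b ∣ a := by
    intro h
    obtain ⟨q, hq, e⟩ := dvd_hom (j := 0) hb ha h
    obtain ⟨c, rfl⟩ := hom0 hq
    have := (hi (-1) c (by rw [e]; simp; ring)).1
    simp at this
  obtain ⟨R, hR⟩ : ∃ R, R = a * B - b * A := ⟨_, rfl⟩
  have hRh : R.IsHomogeneous 3 := by
    rw [hR]; exact (ha.mul hB).sub (hb.mul hA)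
  by_cases hR0 : R = 0
  · right
    have h3 : a ∣ b * A := ⟨B, by rw [hR0] at hR; linear_combination hR⟩
    obtain ⟨q, hq, e⟩ := dvd_hom (j := 1) ha hA ((pa.dvd_or_dvd h3).resolve_left hab)
    refine ⟨q, q, hq, hq, Ideal.mem_span_pair.2 ⟨a, 0, by rw [e]; ring⟩,
      Ideal.mem_span_pair.2 ⟨b, 0, ?_⟩⟩
    apply mul_left_cancel₀ ha0
    rw [hR0, e] at hR
    linear_combination hR
  by_cases hsq : Squarefree R
  · left
    obtain ⟨N, h1⟩ := h1
    obtain ⟨M, h2⟩ := h2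
    rw [← hR] at h1
    rw [show b * A - a * B = -R by rw [hR]; ring, neg_dvd] at h2
    have d1 : R ∣ a * (a * D - d * A) := hsq.isRadical N _ h1
    have d2 : R ∣ b * (b * D - d * B) := hsq.isRadical M _ h2
    have d3 : R ∣ b * (a * D - d * A) := by
      apply hsq.isRadical 2
      obtain ⟨u, hu⟩ := d1
      have : (b * (a * D - d * A)) ^ 2
          = (a * (a * D - d * A)) * (b * (b * D - d * B)) + R * (d * (b * (a * D - d * A))) := by
        rw [hR]; ring
      rw [this, hu]
      exact ⟨u * (b * (b * D - d * B)) + d * (b * (a * D - d * A)), by ring⟩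
    have d4 : R ∣ a * (b * D - d * B) := by
      have : a * (b * D - d * B) = b * (a * D - d * A) - R * d := by rw [hR]; ring
      rw [this]
      exact dvd_sub d3 (dvd_mul_right _ _)
    have cop : ∀ Z : Pol n, R ∣ a * Z → R ∣ b * Z → R ∣ Z := by
      rintro Z ⟨r, hr⟩ ⟨r', hr'⟩
      have e : b * r = a * r' := by
        apply mul_left_cancel₀ hR0
        linear_combination -b * hr + a * hr'
      obtain ⟨t, rfl⟩ := (pa.dvd_or_dvd (⟨r', e⟩ : a ∣ b * r)).resolve_left hab
      exact ⟨t, mul_left_cancel₀ ha0 (by linear_combination hr)⟩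
    obtain ⟨q, hq, e1⟩ := dvd_hom (j := 0) hRh ((ha.mul hD).sub (hd.mul hA)) (cop _ d1 d3)
    obtain ⟨s, rfl⟩ := hom0 hq
    obtain ⟨q, hq, e2⟩ := dvd_hom (j := 0) hRh ((hb.mul hD).sub (hd.mul hB)) (cop _ d4 d2)
    obtain ⟨t, rfl⟩ := hom0 hq
    by_cases c1 : a ∣ d - C s * b
    · obtain ⟨k, hk, e3⟩ := dvd_hom (j := 0) ha (hd.sub (hb.C_mul s)) c1
      obtain ⟨k, rfl⟩ := hom0 hk
      refine ⟨k, s, mul_left_cancel₀ ha0 ?_⟩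
      rw [hR] at e1
      linear_combination e1 + A * e3
    by_cases c2 : b ∣ d + C t * a
    · obtain ⟨k, hk, e3⟩ := dvd_hom (j := 0) hb (hd.add (ha.C_mul t)) c2
      obtain ⟨k, rfl⟩ := hom0 hk
      refine ⟨-t, k, mul_left_cancel₀ hb0 ?_⟩
      rw [hR] at e2
      rw [C_neg]
      linear_combination e2 + B * e3
    have c3 : a ∣ (d - C s * b) * A := ⟨D - C s * B, by rw [hR] at e1; linear_combination -e1⟩
    have c4 : b ∣ (d + C t * a) * B := ⟨D + C t * A, by rw [hR] at e2; linear_combination -e2⟩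
    obtain ⟨a', rfl⟩ := (pa.dvd_or_dvd c3).resolve_left c1
    obtain ⟨b', rfl⟩ := (pb.dvd_or_dvd c4).resolve_left c2
    have f1 : D = C s * b * b' + (d - C s * b) * a' :=
      mul_left_cancel₀ ha0 (by rw [hR] at e1; linear_combination e1)
    have f2 : D = - C t * a * a' + (d + C t * a) * b' :=
      mul_left_cancel₀ hb0 (by rw [hR] at e2; linear_combination e2)
    have f3 : (b' - a') * (C s * b - d - C t * a) = 0 := by linear_combination f2 - f1
    have f4 : b' - a' ≠ 0 := by
      intro h; apply hR0; rw [hR]; linear_combination a * b * h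
    have f5 := (mul_eq_zero.1 f3).resolve_left f4
    refine ⟨-t, s, ?_⟩
    rw [C_neg]
    linear_combination f1 - a' * f5
  · right
    obtain ⟨l, m, hl, hm, hl0, e⟩ := not_sqfree hRh hR0 hsq
    have pl := prime_lin hl hl0
    by_cases hsp : ∃ s t : ℂ, l = C s * a + C t * b
    · obtain ⟨s, t, hst⟩ := hsp
      by_cases hs : s = 0
      · subst hs
        have ht : t ≠ 0 := by rintro rfl; simp at hst; exact hl0 hst
        have hst' : l = C t * b := by rw [hst]; simp
        obtain ⟨k, hk, k1, k2⟩ := case_sq (A := A) (B := C t * B) (a := a) (l := l) (m := C t * m)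
          (hB.C_mul t) hl hl0 (fun h => hba ((Dvd.intro_left _ hst'.symm).trans h)) (by
            linear_combination -A * hst' + C t * (e - hR))
        refine ⟨l, k, hl, hk, k1, ?_⟩
        have := Ideal.mul_mem_left _ (C t⁻¹) k2
        rwa [← mul_assoc, ← C_mul, inv_mul_cancel₀ ht, C_1, one_mul] at this
      · have hlb : ¬ l ∣ b := by
          intro h
          obtain ⟨q, hq, e3⟩ := dvd_hom (j := 0) hl hb h
          obtain ⟨κ, rfl⟩ := hom0 hq
          have h4 := hi (κ * s) (κ * t - 1) (by
            simp only [C_mul, C_sub, C_1]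
            linear_combination -e3 - C κ * hst)
          have : κ = 0 := (mul_eq_zero.1 h4.1).resolve_right hs
          subst this
          simp at e3; exact hb0 e3
        obtain ⟨k, hk, k1, k2⟩ := case_sq (A := B) (B := C s * A + C t * B) (a := b) (l := l)
          (m := - C s * m) ((hA.C_mul s).add (hB.C_mul t)) hl hl0 hlb (by
            linear_combination -B * hst - C s * (e - hR))
        refine ⟨l, k, hl, hk, ?_, k1⟩
        have := Ideal.mul_mem_left _ (C s⁻¹) (sub_mem k2 (Ideal.mul_mem_left _ (C t) k1))
        rwa [add_sub_cancel_right, ← mul_assoc, ← C_mul, inv_mul_cancel₀ hs, C_1, one_mul] at this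
    · have hb' : b ∉ Ideal.span {l, a} := by
        intro h
        obtain ⟨q, r, hq, hr, e3⟩ := mem_pair_hom (j := 0) hl ha hb h
        obtain ⟨q, rfl⟩ := hom0 hq
        obtain ⟨r, rfl⟩ := hom0 hr
        by_cases hq0 : q = 0
        · subst hq0
          exact hab ⟨C r, by simpa using e3⟩
        · apply hsp
          refine ⟨-q⁻¹ * r, q⁻¹, ?_⟩
          have hqq : (C q⁻¹ * C q : Pol n) = 1 := by rw [← C_mul, inv_mul_cancel₀ hq0, C_1]
          rw [C_mul, C_neg]
          linear_combination -C q⁻¹ * e3 - l * hqq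
      have hla : ¬ l ∣ a := by
        intro h
        obtain ⟨q, hq, e3⟩ := dvd_hom (j := 0) hl ha h
        obtain ⟨q, rfl⟩ := hom0 hq
        have hq0 : q ≠ 0 := by rintro rfl; simp at e3; exact ha0 e3
        apply hsp
        refine ⟨q⁻¹, 0, ?_⟩
        have hqq : (C q⁻¹ * C q : Pol n) = 1 := by rw [← C_mul, inv_mul_cancel₀ hq0, C_1]
        rw [C_0]
        linear_combination -C q⁻¹ * e3 - l * hqq
      have hmem : b * A ∈ Ideal.span {l, a} :=
        Ideal.mem_span_pair.2 ⟨-(l * m), B, by linear_combination e - hR⟩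
      have hAm := ((prime_pair hl ha).mem_or_mem hmem).resolve_left hb'
      obtain ⟨u, q, hu, hq, e3⟩ := mem_pair_hom (j := 1) hl ha hA hAm
      have h5 : l ∣ a * (B - b * q) :=
        ⟨l * m + b * u, by linear_combination e - hR + b * e3⟩
      obtain ⟨w, hw⟩ := (pl.dvd_or_dvd h5).resolve_left hla
      refine ⟨l, q, hl, hq, Ideal.mem_span_pair.2 ⟨u, a, by rw [e3]; ring⟩,
        Ideal.mem_span_pair.2 ⟨w, b, by linear_combination -hw⟩⟩

end S11

/-- structure theorem: if `C ∈ √⟨A,B⟩` for homogeneous quadratics `A,B,C`,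
then `C ∈ span{A,B}`, or some nontrivial `αA + βB` is a square of a linear form, or
`A, B, C` all lie in an ideal generated by two linear forms. -/
theorem stmt_11 {n : ℕ} (A B C : MvPolynomial (Fin n) ℂ)
    (hA : A.IsHomogeneous 2) (hB : B.IsHomogeneous 2) (hC : C.IsHomogeneous 2)
    (hrad : C ∈ (Ideal.span {A, B}).radical) :
    C ∈ Submodule.span ℂ ({A, B} : Set (MvPolynomial (Fin n) ℂ)) ∨
    (∃ (α β : ℂ) (ℓ : MvPolynomial (Fin n) ℂ),
      (α, β) ≠ (0, 0) ∧ IsLinForm ℓ ∧ α • A + β • B = ℓ ^ 2) ∨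
    (∃ ℓ₁ ℓ₂ : MvPolynomial (Fin n) ℂ, IsLinForm ℓ₁ ∧ IsLinForm ℓ₂ ∧
      A ∈ Ideal.span {ℓ₁, ℓ₂} ∧ B ∈ Ideal.span {ℓ₁, ℓ₂} ∧ C ∈ Ideal.span {ℓ₁, ℓ₂}) := by
  obtain ⟨f, fs, hf⟩ := S11.quad_form hA
  obtain ⟨g, gs, hg⟩ := S11.quad_form hB
  obtain ⟨h, hs, hh⟩ := S11.quad_form hC
  rcases S11.geom f g fs gs with ⟨α, β, l, hab, hl⟩ | ⟨p, fp, gp, hi⟩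
  · right; left
    obtain ⟨ℓ, hℓ, hℓe⟩ := S11.to_poly l
    refine ⟨α, β, ℓ, hab, hℓ, ?_⟩
    apply MvPolynomial.funext
    intro x
    simp [hf, hg, hℓe, hl, smul_eval]
  · have hp : h p p = 0 := by
      obtain ⟨N, hN⟩ := hrad
      obtain ⟨u, v, huv⟩ := Ideal.mem_span_pair.1 hN
      have := congrArg (eval p) huv
      rw [map_add, map_mul, map_mul, map_pow, hf, hg, hh, fp, gp, mul_zero, mul_zero,
        add_zero] at this
      exact eq_zero_of_pow_eq_zero this.symm
    obtain ⟨a, ha, hae⟩ := S11.to_poly ((2 : ℂ) • f p)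
    obtain ⟨b, hb, hbe⟩ := S11.to_poly ((2 : ℂ) • g p)
    obtain ⟨d, hd, hde⟩ := S11.to_poly ((2 : ℂ) • h p)
    have hae' : ∀ x, eval x a = 2 * f p x := fun x => by rw [hae]; rfl
    have hbe' : ∀ x, eval x b = 2 * g p x := fun x => by rw [hbe]; rfl
    have hde' : ∀ x, eval x d = 2 * h p x := fun x => by rw [hde]; rfl
    have hrad' : C ∈ (Ideal.span {B, A}).radical := by rwa [Set.pair_comm]
    rcases S11.alg hA hB hC ha hb hd (by
        intro s t hst
        apply hi
        ext x
        have := congrArg (eval (Pi.single x 1)) hst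
        simp [hae', hbe'] at this
        simp
        linear_combination this / 2)
      (S11.rad_dvd fs gs hs hf hg hh p fp gp hp hae' hbe' hde' hrad)
      (S11.rad_dvd gs fs hs hg hf hh p gp fp hp hbe' hae' hde' hrad') with
      ⟨s, t, e⟩ | ⟨l, k, hl, hk, k1, k2⟩
    · left
      exact Submodule.mem_span_pair.2 ⟨s, t, by rw [e, smul_eq_C_mul, smul_eq_C_mul]⟩
    · right; right
      refine ⟨l, k, hl, hk, k1, k2, ?_⟩
      have hle : Ideal.span {A, B} ≤ Ideal.span {l, k} := by
        rw [Ideal.span_le]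
        rintro x (rfl | rfl)
        · exact k1
        · exact k2
      exact (S11.prime_pair hl hk).radical_le_iff.2 hle hrad
end
end

section
/- Let P, Q, T be irreducible homogeneous quadratic polynomials over C with T ∈ \sqrt{⟨P,Q⟩}. Suppose P, Q, T all lie in ⟨v_1, v_2⟩ for two linear forms v_1, v_2; suppose T is not in span{P,Q}; suppose no nontrivial linear combination αP + βQ is a square of a linear form; and suppose MS(P) ⊄ MS(Q). Then there exist linear forms v'_1, v'_2 ∈ span{v_1, v_2} and linear forms ℓ, u and scalars α, β ∈ C such that, up to nonzero constant factors: P = v'_1 ℓ + (v'_2)^2, Q = v'_1 u − (v'_2)^2, and T = v'_2(ℓ + u) + αP + βQ. -/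
open MvPolynomial

noncomputable section

lemma aux_comp_mul {σ : Type*} {d : ℕ} (n : ℕ) (A g : MvPolynomial σ ℂ) (hg : g.IsHomogeneous d) :
    homogeneousComponent (n + d) (A * g) = homogeneousComponent n A * g := by
  let _ := MvPolynomial.gradedAlgebra (σ := σ) (R := ℂ)
  have h := DirectSum.coe_decompose_mul_add_of_right_mem (homogeneousSubmodule σ ℂ) (i := n)
    (j := d) (a := A) (b := g) hg
  rw [← decomposition.decompose'_apply, ← decomposition.decompose'_apply]
  exact h

lemma aux_div {σ : Type*} {d : ℕ} (n : ℕ) (A g N : MvPolynomial σ ℂ) (hg : g.IsHomogeneous d)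
    (hN : N.IsHomogeneous (n + d)) (h : N = A * g) :
    ∃ B : MvPolynomial σ ℂ, B.IsHomogeneous n ∧ N = B * g := by
  refine ⟨homogeneousComponent n A, homogeneousComponent_isHomogeneous _ _, ?_⟩
  rw [← aux_comp_mul n A g hg, ← h, homogeneousComponent_eq_self hN]

lemma aux_pair {σ : Type*} (P v₁ v₂ : MvPolynomial σ ℂ) (hP : P.IsHomogeneous 2)
    (hv₁ : IsLinForm v₁) (hv₂ : IsLinForm v₂)
    (h : P ∈ Ideal.span ({v₁, v₂} : Set (MvPolynomial σ ℂ))) :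
    ∃ a b : MvPolynomial σ ℂ, IsLinForm a ∧ IsLinForm b ∧ P = v₁ * a + v₂ * b := by
  obtain ⟨a, b, h⟩ := Ideal.mem_span_pair.1 h
  refine ⟨homogeneousComponent 1 a, homogeneousComponent 1 b,
    homogeneousComponent_isHomogeneous _ _, homogeneousComponent_isHomogeneous _ _, ?_⟩
  rw [mul_comm v₁, mul_comm v₂, ← aux_comp_mul 1 a v₁ hv₁, ← aux_comp_mul 1 b v₂ hv₂, ← map_add, h]
  exact (homogeneousComponent_eq_self hP).symm

lemma lin_add {σ : Type*} {a b : MvPolynomial σ ℂ} (ha : IsLinForm a) (hb : IsLinForm b) :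
    IsLinForm (a + b) := IsHomogeneous.add ha hb

lemma lin_sub {σ : Type*} {a b : MvPolynomial σ ℂ} (ha : IsLinForm a) (hb : IsLinForm b) :
    IsLinForm (a - b) := IsHomogeneous.sub ha hb

lemma lin_C {σ : Type*} {a : MvPolynomial σ ℂ} (c : ℂ) (ha : IsLinForm a) :
    IsLinForm (C c * a) := IsHomogeneous.C_mul ha c

/-- a linear map agreeing on variables agrees on linear forms -/
lemma lin_ext {σ M : Type*} [AddCommGroup M] [Module ℂ M] (f g : MvPolynomial σ ℂ →ₗ[ℂ] M)
    (h : ∀ i, f (X i) = g (X i)) {a : MvPolynomial σ ℂ} (ha : IsLinForm a) : f a = g a := by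
  have h1 : a ∈ homogeneousSubmodule σ ℂ 1 := ha
  rw [homogeneousSubmodule_one_eq_span_X] at h1
  clear ha
  induction h1 using Submodule.span_induction with
  | mem x hx => obtain ⟨i, rfl⟩ := hx; exact h i
  | zero => simp
  | add x y _ _ hx hy => simp [hx, hy]
  | smul c x _ hx => simp [hx]

/-- the projection endomorphism -/
lemma exists_proj {σ : Type*} (s : Set (MvPolynomial σ ℂ)) (hs : ∀ x ∈ s, IsLinForm x) :
    ∃ φ : MvPolynomial σ ℂ →ₐ[ℂ] MvPolynomial σ ℂ,
      RingHom.ker φ = Ideal.span s ∧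
      ∀ a, IsLinForm a → φ a = 0 → a ∈ Submodule.span ℂ s := by
  set W := Submodule.span ℂ s with hW
  obtain ⟨g, hg⟩ := W.mkQ.exists_rightInverse_of_surjective (by simp)
  let π : MvPolynomial σ ℂ →ₗ[ℂ] MvPolynomial σ ℂ := g ∘ₗ W.mkQ
  have hπ : ∀ x, W.mkQ (π x) = W.mkQ x := fun x => by
    have := LinearMap.congr_fun hg (W.mkQ x)
    simpa [π] using this
  have hWI : ∀ x ∈ W, x ∈ Ideal.span s := fun x hx => by
    induction hx using Submodule.span_induction with
    | mem x hx => exact Ideal.subset_span hx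
    | zero => simp
    | add x y _ _ hx hy => exact add_mem hx hy
    | smul c x _ hx => rw [smul_eq_C_mul]; exact Ideal.mul_mem_left _ _ hx
  let φ : MvPolynomial σ ℂ →ₐ[ℂ] MvPolynomial σ ℂ := aeval (fun i => π (X i))
  have hφ : ∀ a, IsLinForm a → φ a = π a := fun a ha =>
    lin_ext φ.toLinearMap π (fun i => by simp [φ]) ha
  refine ⟨φ, le_antisymm ?_ ?_, ?_⟩
  · intro p hp
    have h1 : (Ideal.Quotient.mkₐ ℂ (Ideal.span s)).comp φ = Ideal.Quotient.mkₐ ℂ (Ideal.span s) := by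
      apply MvPolynomial.algHom_ext
      intro i
      simp only [AlgHom.comp_apply, φ, aeval_X, Ideal.Quotient.mkₐ_eq_mk]
      rw [Ideal.Quotient.mk_eq_mk_iff_sub_mem]
      apply hWI
      have := hπ (X i)
      rw [← sub_eq_zero, ← map_sub] at this
      exact (Submodule.Quotient.mk_eq_zero W).1 this
    have h2 := AlgHom.congr_fun h1 p
    have hp' : φ p = 0 := hp
    rw [AlgHom.comp_apply, hp', map_zero] at h2
    exact Ideal.Quotient.eq_zero_iff_mem.1 h2.symm
  · rw [Ideal.span_le]
    intro x hx
    change φ x = 0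
    rw [hφ x (hs x hx)]
    have : W.mkQ x = 0 := by simpa using Submodule.subset_span hx
    simp [π, -Submodule.mkQ_apply, this]
  · intro a ha h0
    rw [hφ a ha] at h0
    have := hπ a
    rw [h0, map_zero] at this
    simpa using this.symm

lemma span_prime {σ : Type*} (s : Set (MvPolynomial σ ℂ)) (hs : ∀ x ∈ s, IsLinForm x) :
    (Ideal.span s).IsPrime := by
  obtain ⟨φ, h, _⟩ := exists_proj s hs
  rw [← h]; exact RingHom.ker_isPrime _

lemma span_lin {σ : Type*} (s : Set (MvPolynomial σ ℂ)) (hs : ∀ x ∈ s, IsLinForm x)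
    {a : MvPolynomial σ ℂ} (ha : IsLinForm a) (h : a ∈ Ideal.span s) : a ∈ Submodule.span ℂ s := by
  obtain ⟨φ, h1, h2⟩ := exists_proj s hs
  rw [← h1] at h
  exact h2 a ha h

lemma pair_prime {σ : Type*} {x y : MvPolynomial σ ℂ} (hx : IsLinForm x) (hy : IsLinForm y) :
    (Ideal.span ({x, y} : Set (MvPolynomial σ ℂ))).IsPrime :=
  span_prime _ (by rintro z (rfl | rfl) <;> assumption)

lemma pair_lin {σ : Type*} {x y a : MvPolynomial σ ℂ} (hx : IsLinForm x) (hy : IsLinForm y)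
    (ha : IsLinForm a) (h : a ∈ Ideal.span ({x, y} : Set (MvPolynomial σ ℂ))) :
    ∃ c d : ℂ, a = C c * x + C d * y := by
  have := span_lin _ (by rintro z (rfl | rfl) <;> assumption) ha h
  obtain ⟨c, d, h⟩ := Submodule.mem_span_pair.1 this
  exact ⟨c, d, by rw [← h, smul_eq_C_mul, smul_eq_C_mul]⟩

lemma single_prime {σ : Type*} {x : MvPolynomial σ ℂ} (hx : IsLinForm x) (h0 : x ≠ 0) :
    Prime x := by
  have := span_prime {x} (by rintro z rfl; assumption)
  exact (Ideal.span_singleton_prime h0).1 this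

lemma lin_not_unit {σ : Type*} {x : MvPolynomial σ ℂ} (hx : IsLinForm x) : ¬ IsUnit x := by
  intro h
  have h1 := h.map (constantCoeff (σ := σ) (R := ℂ))
  have h2 : constantCoeff x = 0 := by
    rw [constantCoeff_eq]
    exact IsHomogeneous.coeff_eq_zero hx (by simp)
  rw [h2] at h1
  simp at h1

lemma irr_ne {σ : Type*} {P x y : MvPolynomial σ ℂ} (hP : Irreducible P) (hx : IsLinForm x)
    (hy : IsLinForm y) : P ≠ x * y := by
  intro h
  rcases hP.isUnit_or_isUnit h with h | h
  · exact lin_not_unit hx h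
  · exact lin_not_unit hy h

/-- directional derivative attached to a functional -/
lemma exists_der {σ : Type*} (f : MvPolynomial σ ℂ →ₗ[ℂ] ℂ) :
    ∃ D : Derivation ℂ (MvPolynomial σ ℂ) (MvPolynomial σ ℂ),
      ∀ a, IsLinForm a → D a = C (f a) := by
  refine ⟨mkDerivation ℂ (fun i => C (f (X i))), fun a ha => ?_⟩
  exact lin_ext (mkDerivation ℂ (fun i => C (f (X i)))).toLinearMap
    ((Algebra.linearMap ℂ (MvPolynomial σ ℂ)) ∘ₗ f)
    (fun i => by simp [MvPolynomial.algebraMap_eq]) ha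

lemma iter_leib {σ : Type*} (D : Derivation ℂ (MvPolynomial σ ℂ) (MvPolynomial σ ℂ))
    (g : MvPolynomial σ ℂ) (hg : D (D g) = 0) (k : ℕ) : ∀ A : MvPolynomial σ ℂ,
    D^[k + 1] (A * g) = D^[k + 1] A * g + ((k : MvPolynomial σ ℂ) + 1) * D^[k] A * D g := by
  intro A
  induction k with
  | zero => simp [Derivation.leibniz]; ring
  | succ k ih =>
    rw [Function.iterate_succ_apply', ih, Function.iterate_succ_apply' (n := k + 1) (x := A)]
    simp only [Function.iterate_succ_apply', map_add, Derivation.leibniz, smul_eq_mul, hg,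
      Derivation.map_natCast, Derivation.map_one_eq_zero]
    push_cast
    ring

lemma iter_add' {σ : Type*} (D : Derivation ℂ (MvPolynomial σ ℂ) (MvPolynomial σ ℂ)) (k : ℕ)
    (A B : MvPolynomial σ ℂ) : D^[k] (A + B) = D^[k] A + D^[k] B := by
  induction k generalizing A B with
  | zero => rfl
  | succ k ih => simp [ih]

lemma iter_zero' {σ : Type*} (D : Derivation ℂ (MvPolynomial σ ℂ) (MvPolynomial σ ℂ)) (k : ℕ) :
    D^[k] 0 = 0 := by
  induction k with
  | zero => rfl
  | succ k ih => simp [ih]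

lemma loc_nilp {σ : Type*} (D : Derivation ℂ (MvPolynomial σ ℂ) (MvPolynomial σ ℂ))
    (hD : ∀ i, D (D (X i)) = 0) (A : MvPolynomial σ ℂ) : ∃ N, ∀ k, D^[N + k] A = 0 := by
  induction A using MvPolynomial.induction_on with
  | C a => exact ⟨1, fun k => by
      rw [add_comm, Function.iterate_succ_apply, derivation_C, iter_zero']⟩
  | add p q hp hq =>
    obtain ⟨N, hN⟩ := hp
    obtain ⟨M, hM⟩ := hq
    refine ⟨N + M, fun k => ?_⟩
    rw [iter_add', add_assoc, hN, add_left_comm, hM, add_zero]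
  | mul_X p i hp =>
    obtain ⟨N, hN⟩ := hp
    refine ⟨N + 1, fun k => ?_⟩
    rw [show N + 1 + k = (N + k) + 1 by ring, iter_leib D _ (hD i), hN, add_assoc, hN]
    simp

lemma elim {σ : Type*} (D : Derivation ℂ (MvPolynomial σ ℂ) (MvPolynomial σ ℂ))
    (hD : ∀ i, D (D (X i)) = 0) (P Q N v : MvPolynomial σ ℂ) (hQ : Prime Q) (hP : D P = v)
    (hv : D v = 0) (hDQ : D Q = 0) (hDN : D N = 0) (hQv : ¬ Q ∣ v)
    (h : N ∈ (Ideal.span {P, Q}).radical) : Q ∣ N := by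
  obtain ⟨k, hk⟩ := h
  obtain ⟨A, B, hAB⟩ := Ideal.mem_span_pair.1 hk
  have hDk : D (N ^ k) = 0 := by simp [Derivation.leibniz_pow, hDN]
  obtain ⟨M, hM⟩ := loc_nilp D hD A
  have key : ∀ j, Q ∣ D^[j + 1] A → Q ∣ D^[j] A := by
    intro j hj
    have h1 : D^[j + 1] (A * P + B * Q) = 0 := by
      rw [hAB, Function.iterate_succ_apply, hDk, iter_zero']
    rw [iter_add', iter_leib D P (by rw [hP, hv]), iter_leib D Q (by rw [hDQ, map_zero]), hDQ,
      hP] at h1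
    have h2 : Q ∣ C ((j : ℂ) + 1) * (D^[j] A * v) := by
      obtain ⟨E, hE⟩ := hj
      refine ⟨-(E * P + D^[j + 1] B), ?_⟩
      rw [hE] at h1
      simp only [map_add, map_natCast, map_one]
      linear_combination h1
    have h3 : Q ∣ D^[j] A * v := by
      obtain ⟨E, hE⟩ := h2
      refine ⟨C ((j : ℂ) + 1)⁻¹ * E, ?_⟩
      have : (C ((j : ℂ) + 1)⁻¹ : MvPolynomial σ ℂ) * C ((j : ℂ) + 1) = 1 := by
        rw [← C_mul, inv_mul_cancel₀ (Nat.cast_add_one_ne_zero j), C_1]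
      linear_combination (C ((j : ℂ) + 1)⁻¹ : MvPolynomial σ ℂ) * hE - (D^[j] A * v) * this
    exact (hQ.dvd_or_dvd h3).resolve_right hQv
  have all : ∀ j, Q ∣ D^[j] A → Q ∣ A := by
    intro j
    induction j with
    | zero => exact id
    | succ j ih => exact fun h => ih (key j h)
  have hA : Q ∣ A := all M (by have := hM 0; rw [add_zero] at this; rw [this]; exact dvd_zero _)
  refine hQ.dvd_of_dvd_pow (n := k) ?_
  rw [← hAB]
  exact dvd_add (hA.mul_right _) (Dvd.intro_left _ rfl)

/-- The conclusion for a fixed choice of the two linear forms. -/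
def Concl {σ : Type*} (P Q T v₁ v₂ : MvPolynomial σ ℂ) : Prop :=
  ∃ ℓ u : MvPolynomial σ ℂ, IsLinForm ℓ ∧ IsLinForm u ∧
      ∃ (α β c₁ c₂ c₃ : ℂ), c₁ ≠ 0 ∧ c₂ ≠ 0 ∧ c₃ ≠ 0 ∧
        c₁ • P = v₁ * ℓ + v₂ ^ 2 ∧
        c₂ • Q = v₁ * u - v₂ ^ 2 ∧
        c₃ • T = v₂ * (ℓ + u) + α • P + β • Q

lemma C_inv {σ : Type*} {k : ℂ} (hk : k ≠ 0) : (C k⁻¹ : MvPolynomial σ ℂ) * C k = 1 := by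
  rw [← C_mul, inv_mul_cancel₀ hk, C_1]

lemma assemble {σ : Type*} {P Q T v₁ v₂ ℓ u : MvPolynomial σ ℂ} {k r q α β : ℂ} (hk : k ≠ 0)
    (hr : r ≠ 0) (hq : q ≠ 0) (hℓ : IsLinForm ℓ) (hu : IsLinForm u)
    (hP : P = v₁ * ℓ + C k * v₂ ^ 2) (hQ : Q = v₁ * u + C r * v₂ ^ 2)
    (hT : T = C q * v₂ * (ℓ - C k * C r⁻¹ * u) + C α * P + C β * Q) : Concl P Q T v₁ v₂ := by
  refine ⟨C k⁻¹ * ℓ, C (-r⁻¹) * u, lin_C _ hℓ, lin_C _ hu, q⁻¹ * k⁻¹ * α, q⁻¹ * k⁻¹ * β,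
    k⁻¹, -r⁻¹, q⁻¹ * k⁻¹, inv_ne_zero hk, neg_ne_zero.2 (inv_ne_zero hr),
    mul_ne_zero (inv_ne_zero hq) (inv_ne_zero hk), ?_, ?_, ?_⟩
  · rw [smul_eq_C_mul, hP]
    linear_combination v₂ ^ 2 * C_inv (σ := σ) hk
  · rw [smul_eq_C_mul, hQ, C_neg]
    linear_combination -v₂ ^ 2 * C_inv (σ := σ) hr
  · simp only [smul_eq_C_mul, C_mul, C_neg]
    rw [hT]
    linear_combination (v₂ * C k⁻¹ * ℓ - v₂ * C k⁻¹ * C k * C r⁻¹ * u) * C_inv (σ := σ) hq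
      - v₂ * C r⁻¹ * u * C_inv (σ := σ) hk

lemma not_dvd {σ : Type*} {Q v : MvPolynomial σ ℂ} (hQ : Q.IsHomogeneous 2) (hv : IsLinForm v)
    (h0 : v ≠ 0) : ¬ Q ∣ v := by
  rintro ⟨c, hc⟩
  have hQ0 : Q ≠ 0 := by rintro rfl; exact h0 (by simpa using hc)
  have hc0 : c ≠ 0 := by rintro rfl; exact h0 (by simpa using hc)
  have h1 := congrArg totalDegree hc
  rw [totalDegree_mul_of_isDomain hQ0 hc0, hQ.totalDegree hQ0, IsHomogeneous.totalDegree hv h0] at h1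
  omega

/-- a binary quadratic form is reducible -/
lemma binary_red {σ : Type*} {Q v₁ v₂ : MvPolynomial σ ℂ} (hQ : Irreducible Q)
    (hv₁ : IsLinForm v₁) (hv₂ : IsLinForm v₂) {r s t : ℂ} (hr : r ≠ 0)
    (h : Q = C s * v₁ ^ 2 + C t * v₁ * v₂ + C r * v₂ ^ 2) : False := by
  obtain ⟨d, hd⟩ := IsAlgClosed.exists_pow_nat_eq (t ^ 2 - 4 * r * s) (n := 2) (by norm_num)
  apply irr_ne hQ (x := C r * v₂ + C ((t + d) / 2) * v₁) (y := v₂ + C ((t - d) / (2 * r)) * v₁)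
    (lin_add (lin_C _ hv₂) (lin_C _ hv₁)) (lin_add hv₂ (lin_C _ hv₁))
  have h1 : s = ((t + d) / 2) * ((t - d) / (2 * r)) := by
    field_simp; linear_combination hd
  have h2 : t = ((t + d) / 2) + r * ((t - d) / (2 * r)) := by
    field_simp; ring
  have h1' := congrArg (C (σ := σ)) h1
  have h2' := congrArg (C (σ := σ)) h2
  rw [C_mul] at h1'
  rw [C_add, C_mul] at h2'
  rw [h]
  linear_combination v₁ ^ 2 * h1' + v₁ * v₂ * h2'

lemma core {σ : Type*} (P Q T v₁ v₂ a₁ a₂ b₁ b₂ t₁ t₂ : MvPolynomial σ ℂ)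
    (hPirr : Irreducible P) (hQirr : Irreducible Q)
    (hrad : T ∈ (Ideal.span {P, Q}).radical)
    (hv₁ : IsLinForm v₁) (hv₂ : IsLinForm v₂) (ha₁ : IsLinForm a₁) (ha₂ : IsLinForm a₂)
    (hb₁ : IsLinForm b₁) (hb₂ : IsLinForm b₂) (ht₁ : IsLinForm t₁) (ht₂ : IsLinForm t₂)
    (hP : P = v₁ * a₁ + v₂ * a₂) (hQ : Q = v₁ * b₁ + v₂ * b₂) (hT : T = v₁ * t₁ + v₂ * t₂)
    (hTspan : T ∉ Submodule.span ℂ ({P, Q} : Set (MvPolynomial σ ℂ)))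
    (f : MvPolynomial σ ℂ →ₗ[ℂ] ℂ) (hf1 : f v₁ = 0) (hf2 : f v₂ = 0) (hf3 : f b₁ = 0)
    (hf4 : f b₂ = 0) (hf5 : f a₁ = 1) (hf6 : f a₂ = 0) : Concl P Q T v₁ v₂ := by
  have hP2 : P.IsHomogeneous 2 := hP ▸ (IsHomogeneous.mul hv₁ ha₁).add (IsHomogeneous.mul hv₂ ha₂)
  have hQ2 : Q.IsHomogeneous 2 := hQ ▸ (IsHomogeneous.mul hv₁ hb₁).add (IsHomogeneous.mul hv₂ hb₂)
  have hT2 : T.IsHomogeneous 2 := hT ▸ (IsHomogeneous.mul hv₁ ht₁).add (IsHomogeneous.mul hv₂ ht₂)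
  have hQp : Prime Q := hQirr.prime
  have hv10 : v₁ ≠ 0 := by
    rintro rfl; exact irr_ne hPirr hv₂ ha₂ (by rw [hP]; ring)
  have hv1p : Prime v₁ := single_prime hv₁ hv10
  have hv12 : ∀ c : ℂ, v₂ ≠ C c * v₁ := by
    intro c hc
    exact irr_ne hPirr hv₁ (lin_add ha₁ (lin_C c ha₂)) (by rw [hP, hc]; ring)
  have hv12d : ¬ v₁ ∣ v₂ := by
    rintro ⟨c, hc⟩
    obtain ⟨B, hB, hB'⟩ := aux_div 0 c v₁ v₂ hv₁ hv₂ (by rw [hc]; ring)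
    rw [← totalDegree_zero_iff_isHomogeneous, totalDegree_eq_zero_iff_eq_C] at hB
    exact hv12 _ (hB ▸ hB')
  obtain ⟨D, hD⟩ := exists_der f
  have hDD : ∀ i, D (D (X i)) = 0 := fun i => by
    rw [hD _ (isHomogeneous_X _ _), derivation_C]
  have hDP : D P = v₁ := by
    rw [hP]
    simp [Derivation.leibniz, hD _ hv₁, hD _ hv₂, hD _ ha₁, hD _ ha₂, hf1, hf2, hf5, hf6]
  have hDQ : D Q = 0 := by
    rw [hQ]
    simp [Derivation.leibniz, hD _ hv₁, hD _ hv₂, hD _ hb₁, hD _ hb₂, hf1, hf2, hf3, hf4]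
  set p := f t₁ with hp
  set q := f t₂ with hq
  have hDT : D T = v₁ * C p + v₂ * C q := by
    rw [hT]
    simp [Derivation.leibniz, hD _ hv₁, hD _ hv₂, hD _ ht₁, hD _ ht₂, hf1, hf2, hp, hq]
  have hPI : P ∈ Ideal.span {P, Q} := Ideal.subset_span (by simp)
  have hQI : Q ∈ Ideal.span {P, Q} := Ideal.subset_span (by simp)
  have hN : v₁ * (T - C p * P) - C q * v₂ * P ∈ (Ideal.span {P, Q}).radical := by
    refine sub_mem (Ideal.mul_mem_left _ _ (sub_mem hrad (Ideal.mul_mem_left _ _ ?_)))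
      (Ideal.mul_mem_left _ _ ?_) <;> exact Ideal.le_radical hPI
  have hDN : D (v₁ * (T - C p * P) - C q * v₂ * P) = 0 := by
    simp only [map_sub, Derivation.leibniz, smul_eq_mul, hD _ hv₁, hD _ hv₂, hDP, hDT, hf1, hf2,
      derivation_C, C_0]
    ring
  obtain ⟨m₀, hm₀⟩ := elim D hDD P Q _ v₁ hQp hDP (by rw [hD _ hv₁, hf1, C_0]) hDQ hDN
    (not_dvd hQ2 hv₁ hv10) hN
  have hNhom : (v₁ * (T - C p * P) - C q * v₂ * P).IsHomogeneous (1 + 2) :=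
    (IsHomogeneous.mul hv₁ (hT2.sub (hP2.C_mul p))).sub (IsHomogeneous.mul (lin_C q hv₂) hP2)
  obtain ⟨m, hm, hmN⟩ := aux_div 1 m₀ Q _ hQ2 hNhom (by rw [hm₀]; ring)
  clear hm₀ m₀ hNhom hDN hN
  have hm : IsLinForm m := hm
  have hq0 : q ≠ 0 := by
    intro h0
    rw [h0] at hmN
    have h1 : Q ∣ v₁ * (T - C p * P) := ⟨m, by rw [C_0] at hmN; linear_combination hmN⟩
    obtain ⟨c, hc⟩ := (hQp.dvd_or_dvd h1).resolve_left (not_dvd hQ2 hv₁ hv10)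
    obtain ⟨B, hB, hB'⟩ := aux_div 0 c Q (T - C p * P) hQ2 (hT2.sub (hP2.C_mul p))
      (by rw [hc]; ring)
    rw [← totalDegree_zero_iff_isHomogeneous, totalDegree_eq_zero_iff_eq_C] at hB
    rw [hB] at hB'
    apply hTspan
    rw [Submodule.mem_span_pair]
    refine ⟨p, coeff 0 B, ?_⟩
    rw [smul_eq_C_mul, smul_eq_C_mul]
    linear_combination -hB'
  have h1 : v₁ ∣ C q * v₂ * a₂ + m * b₂ := by
    have : v₁ ∣ v₂ * (C q * v₂ * a₂ + m * b₂) := by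
      refine ⟨T - C p * P - C q * v₂ * a₁ - m * b₁, ?_⟩
      have h := hmN
      rw [hQ] at h
      nth_rewrite 2 [hP] at h
      linear_combination -h
    exact (hv1p.dvd_or_dvd this).resolve_left hv12d
  obtain ⟨g₀, hg₀⟩ := h1
  have h2 : m * b₂ ∈ Ideal.span ({v₁, v₂} : Set (MvPolynomial σ ℂ)) :=
    Ideal.mem_span_pair.2 ⟨g₀, -(C q * a₂), by linear_combination -hg₀⟩
  rcases (pair_prime hv₁ hv₂).mem_or_mem h2 with h3 | h3
  ·
    obtain ⟨g, e, hme⟩ := pair_lin hv₁ hv₂ hm h3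
    have h4 : v₁ * (T - C p * P - C g * Q) = v₂ * (C q * P + C e * Q) := by
      rw [hme] at hmN
      linear_combination hmN
    have h5 : v₁ ∣ C q * P + C e * Q :=
      (hv1p.dvd_or_dvd (⟨_, h4.symm⟩ : v₁ ∣ v₂ * (C q * P + C e * Q))).resolve_left hv12d
    obtain ⟨l₀, hl₀⟩ := h5
    obtain ⟨l, hl, hl'⟩ := aux_div 1 l₀ v₁ (C q * P + C e * Q) hv₁
      ((hP2.C_mul q).add (hQ2.C_mul e)) (by rw [hl₀]; ring)
    have hl : IsLinForm l := hl
    have hTl : T = v₂ * l + C p * P + C g * Q := by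
      apply mul_left_cancel₀ hv10
      linear_combination h4 + v₂ * hl'
    have he0 : e ≠ 0 := by
      rintro rfl
      refine irr_ne hPirr (lin_C q⁻¹ hl) hv₁ ?_
      rw [C_0] at hl'
      linear_combination C q⁻¹ * hl' - P * C_inv (σ := σ) hq0
    have hfl : f l = q := by
      have := congrArg D hl'
      simp only [map_add, Derivation.leibniz, smul_eq_mul, hDP, hDQ, derivation_C, hD _ hl,
        hD _ hv₁, hf1, C_0] at this
      have h6 : v₁ * C (f l) = v₁ * C q := by linear_combination -this
      exact C_injective _ _ (mul_left_cancel₀ hv10 h6)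
    have hpr := pair_prime hv₁ hb₂
    have hv1J : v₁ ∈ Ideal.span ({v₁, b₂} : Set (MvPolynomial σ ℂ)) := Ideal.subset_span (by simp)
    have hb2J : b₂ ∈ Ideal.span ({v₁, b₂} : Set (MvPolynomial σ ℂ)) := Ideal.subset_span (by simp)
    have hQJ : Q ∈ Ideal.span ({v₁, b₂} : Set (MvPolynomial σ ℂ)) := by
      rw [hQ]; exact add_mem (Ideal.mul_mem_right _ _ hv1J) (Ideal.mul_mem_left _ _ hb2J)
    have hPJ : P ∈ Ideal.span ({v₁, b₂} : Set (MvPolynomial σ ℂ)) := by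
      have : P = C q⁻¹ * (l * v₁ - C e * Q) := by
        linear_combination C q⁻¹ * hl' - P * C_inv (σ := σ) hq0
      rw [this]
      exact Ideal.mul_mem_left _ _ (sub_mem (Ideal.mul_mem_left _ _ hv1J)
        (Ideal.mul_mem_left _ _ hQJ))
    have hTJ : T ∈ Ideal.span ({v₁, b₂} : Set (MvPolynomial σ ℂ)) := by
      have h6 : Ideal.span {P, Q} ≤ Ideal.span ({v₁, b₂} : Set (MvPolynomial σ ℂ)) := by
        rw [Ideal.span_le]
        rintro z (rfl | rfl)
        · exact hPJ
        · exact hQJ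
      have h7 := Ideal.radical_mono h6 hrad
      rwa [hpr.radical] at h7
    have hvlJ : v₂ * l ∈ Ideal.span ({v₁, b₂} : Set (MvPolynomial σ ℂ)) := by
      have : v₂ * l = T - C p * P - C g * Q := by rw [hTl]; ring
      rw [this]
      exact sub_mem (sub_mem hTJ (Ideal.mul_mem_left _ _ hPJ)) (Ideal.mul_mem_left _ _ hQJ)
    rcases hpr.mem_or_mem hvlJ with h8 | h8
    · obtain ⟨s, r', hs⟩ := pair_lin hv₁ hb₂ hv₂ h8
      have hr'0 : r' ≠ 0 := by
        rintro rfl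
        exact hv12 s (by rw [hs, C_0]; ring)
      have hb2' : b₂ = C r'⁻¹ * v₂ - C r'⁻¹ * C s * v₁ := by
        linear_combination -C r'⁻¹ * hs - b₂ * C_inv (σ := σ) hr'0
      set r := r'⁻¹ with hr
      have hr0 : r ≠ 0 := inv_ne_zero hr'0
      have hu : IsLinForm (b₁ - C r * (C s * v₂)) := lin_sub hb₁ (lin_C _ (lin_C _ hv₂))
      have hQ' : Q = v₁ * (b₁ - C r * (C s * v₂)) + C r * v₂ ^ 2 := by
        rw [hQ, hb2']; ring
      set u := b₁ - C r * (C s * v₂) with hu'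
      refine assemble (k := -(q⁻¹ * e * r)) (r := r) (q := q) (ℓ := C q⁻¹ * (l - C e * u)) (u := u)
        (α := p) (β := g) (neg_ne_zero.2 (mul_ne_zero (mul_ne_zero (inv_ne_zero hq0) he0) hr0)) hr0
        hq0 (lin_C _ (lin_sub hl (lin_C _ hu))) hu ?_ hQ' ?_
      · simp only [C_neg, C_mul]
        rw [hQ'] at hl'
        linear_combination C q⁻¹ * hl' - P * C_inv (σ := σ) hq0
      · simp only [C_neg, C_mul]
        rw [hTl]
        linear_combination (-v₂ * l) * C_inv (σ := σ) hq0
          + (- C q * v₂ * C q⁻¹ * C e * u) * C_inv (σ := σ) hr0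
    · obtain ⟨s, r', hs⟩ := pair_lin hv₁ hb₂ hl h8
      exfalso
      apply hq0
      rw [← hfl, hs, ← smul_eq_C_mul, ← smul_eq_C_mul]
      simp [hf1, hf4]
  ·
    obtain ⟨s, r, hsr⟩ := pair_lin hv₁ hv₂ hb₂ h3
    have hu : IsLinForm (b₁ + C s * v₂) := lin_add hb₁ (lin_C _ hv₂)
    have hQ' : Q = v₁ * (b₁ + C s * v₂) + C r * v₂ ^ 2 := by
      rw [hQ, hsr]; ring
    set u := b₁ + C s * v₂ with hu'
    have hr0 : r ≠ 0 := by
      rintro rfl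
      exact irr_ne hQirr hv₁ hu (by rw [hQ', C_0]; ring)
    have h4 : v₁ ∣ v₂ * (C q * a₂ + C r * m) := by
      refine ⟨g₀ - C s * m, ?_⟩
      rw [hsr] at hg₀
      linear_combination hg₀
    obtain ⟨g₁, hg₁⟩ := (hv1p.dvd_or_dvd h4).resolve_left hv12d
    obtain ⟨B, hB, hB'⟩ := aux_div 0 g₁ v₁ (C q * a₂ + C r * m) hv₁
      (lin_add (lin_C _ ha₂) (lin_C _ hm)) (by rw [hg₁]; ring)
    rw [← totalDegree_zero_iff_isHomogeneous, totalDegree_eq_zero_iff_eq_C] at hB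
    rw [hB] at hB'
    set g := coeff 0 B
    clear hg₁ g₁ hB
    have hTr : C r * (T - C p * P) = C r * C q * v₂ * a₁ - C q * a₂ * u + C g * Q := by
      apply mul_left_cancel₀ hv10
      have h := hmN
      nth_rewrite 2 [hP] at h
      linear_combination C r * h + Q * hB' - C q * a₂ * hQ'
    have hPv : P ∈ Ideal.span ({v₁, v₂} : Set (MvPolynomial σ ℂ)) :=
      Ideal.mem_span_pair.2 ⟨a₁, a₂, by rw [hP]; ring⟩
    have hQv : Q ∈ Ideal.span ({v₁, v₂} : Set (MvPolynomial σ ℂ)) :=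
      Ideal.mem_span_pair.2 ⟨b₁, b₂, by rw [hQ]; ring⟩
    have hTv : T ∈ Ideal.span ({v₁, v₂} : Set (MvPolynomial σ ℂ)) :=
      Ideal.mem_span_pair.2 ⟨t₁, t₂, by rw [hT]; ring⟩
    have hv2I : v₂ ∈ Ideal.span ({v₁, v₂} : Set (MvPolynomial σ ℂ)) := Ideal.subset_span (by simp)
    have hau : a₂ * u ∈ Ideal.span ({v₁, v₂} : Set (MvPolynomial σ ℂ)) := by
      have : a₂ * u = C q⁻¹ * (C r * C q * a₁ * v₂ + C g * Q - C r * T + C r * C p * P) := by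
        linear_combination C q⁻¹ * hTr - a₂ * u * C_inv (σ := σ) hq0
      rw [this]
      exact Ideal.mul_mem_left _ _ (add_mem (sub_mem (add_mem (Ideal.mul_mem_left _ _ hv2I)
        (Ideal.mul_mem_left _ _ hQv)) (Ideal.mul_mem_left _ _ hTv)) (Ideal.mul_mem_left _ _ hPv))
    rcases (pair_prime hv₁ hv₂).mem_or_mem hau with h5 | h5
    · obtain ⟨h, k, hhk⟩ := pair_lin hv₁ hv₂ ha₂ h5
      have hℓ : IsLinForm (a₁ + C h * v₂) := lin_add ha₁ (lin_C _ hv₂)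
      have hP' : P = v₁ * (a₁ + C h * v₂) + C k * v₂ ^ 2 := by rw [hP, hhk]; ring
      have hk0 : k ≠ 0 := by
        rintro rfl
        exact irr_ne hPirr hv₁ hℓ (by rw [hP', C_0]; ring)
      refine assemble (k := k) (r := r) (q := q) (α := p) (β := r⁻¹ * (g - q * h)) hk0 hr0
        hq0 hℓ hu hP' hQ' ?_
      simp only [C_mul, C_sub]
      rw [hhk] at hTr
      have hri := C_inv (σ := σ) hr0
      have e1 : T = C r⁻¹ * (C r * C q * v₂ * a₁ - C q * (C h * v₁ + C k * v₂) * u + C g * Q)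
          + C p * P := by
        linear_combination C r⁻¹ * hTr - (T - C p * P) * hri
      rw [e1]
      linear_combination (C q * v₂ * a₁ + C q * C h * v₂ ^ 2) * hri + C r⁻¹ * C q * C h * hQ'
    · exfalso
      obtain ⟨s', t', hst⟩ := pair_lin hv₁ hv₂ hu h5
      refine binary_red hQirr hv₁ hv₂ hr0 (s := s') (t := t') ?_
      rw [hQ', hst]; ring

/-- If `D` kills an irreducible `a b + c d`, it kills `a`. -/
lemma der_kill {σ : Type*} {P a b c d : MvPolynomial σ ℂ} (hP : Irreducible P)
    (ha : IsLinForm a) (hb : IsLinForm b) (hc : IsLinForm c) (hd : IsLinForm d)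
    (h : P = a * b + c * d) (f : MvPolynomial σ ℂ →ₗ[ℂ] ℂ)
    (D : Derivation ℂ (MvPolynomial σ ℂ) (MvPolynomial σ ℂ))
    (hD : ∀ a, IsLinForm a → D a = C (f a)) (hDP : D P = 0) : f a = 0 := by
  by_contra h0
  rw [h] at hDP
  simp only [map_add, Derivation.leibniz, smul_eq_mul, hD _ ha, hD _ hb, hD _ hc, hD _ hd] at hDP
  have h2 := congrArg D hDP
  simp only [map_add, Derivation.leibniz, smul_eq_mul, hD _ ha, hD _ hb, hD _ hc, hD _ hd,
    derivation_C, map_zero] at h2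
  have h3 : f a * f b = - (f c * f d) := by
    apply C_injective σ ℂ
    simp only [C_mul, C_neg]
    have h4 : (C (2 : ℂ) : MvPolynomial σ ℂ) ≠ 0 := by simp
    apply mul_left_cancel₀ h4
    have : (C (2 : ℂ) : MvPolynomial σ ℂ) = 2 := map_ofNat C 2
    rw [this]
    linear_combination h2
  have hi := C_inv (σ := σ) h0
  have h3' := congrArg (C (σ := σ)) h3
  simp only [C_mul, C_neg] at h3'
  refine irr_ne hP (lin_sub hc (lin_C ((f a)⁻¹ * f c) ha)) (lin_sub hd (lin_C ((f a)⁻¹ * f d) ha)) ?_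
  rw [h]
  simp only [C_mul]
  linear_combination C (f a)⁻¹ * a * hDP - a * b * hi + a ^ 2 * C (f b) * C (f a)⁻¹ * hi
    - (a ^ 2 * C (f a)⁻¹ ^ 2) * h3'

lemma rankS_two {σ : Type*} {P v₁ v₂ a₁ a₂ : MvPolynomial σ ℂ} (hP : Irreducible P)
    (hv₁ : IsLinForm v₁) (hv₂ : IsLinForm v₂) (ha₁ : IsLinForm a₁) (ha₂ : IsLinForm a₂)
    (h : P = v₁ * a₁ + v₂ * a₂) : rankS P = 2 := by
  have h2 : HasRep P 2 := ⟨![v₁, v₂], ![a₁, a₂], by simp [Fin.forall_fin_two, hv₁, hv₂],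
    by simp [Fin.forall_fin_two, ha₁, ha₂], by simp [h]⟩
  have hmem : rankS P ∈ {r | HasRep P r} := Nat.sInf_mem ⟨2, h2⟩
  have hle : rankS P ≤ 2 := Nat.sInf_le h2
  have h1 : rankS P ≠ 1 := by
    intro h1
    rw [h1] at hmem
    obtain ⟨a, b, ha, hb, he⟩ := hmem
    exact irr_ne hP (ha 0) (hb 0) (by simpa using he)
  have h0 : rankS P ≠ 0 := by
    intro h0
    rw [h0] at hmem
    obtain ⟨a, b, ha, hb, he⟩ := hmem
    exact hP.ne_zero (by simpa using he)
  omega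

lemma MS_eq {σ : Type*} {P : MvPolynomial σ ℂ} {r : ℕ} (h : rankS P = r) :
    MS P = ⨆ p : {ab : (Fin r → MvPolynomial σ ℂ) × (Fin r → MvPolynomial σ ℂ) //
      (∀ i, IsLinForm (ab.1 i)) ∧ (∀ i, IsLinForm (ab.2 i)) ∧ P = ∑ i, ab.1 i * ab.2 i},
    Submodule.span ℂ (Set.range p.1.1 ∪ Set.range p.1.2) := by
  subst h; rfl

lemma MS_le {σ : Type*} {P Q v₁ v₂ a₁ a₂ b₁ b₂ : MvPolynomial σ ℂ} (hP : Irreducible P)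
    (hQ : Irreducible Q)
    (hv₁ : IsLinForm v₁) (hv₂ : IsLinForm v₂) (ha₁ : IsLinForm a₁) (ha₂ : IsLinForm a₂)
    (hb₁ : IsLinForm b₁) (hb₂ : IsLinForm b₂)
    (h : P = v₁ * a₁ + v₂ * a₂) (h' : Q = v₁ * b₁ + v₂ * b₂)
    (h1 : a₁ ∈ Submodule.span ℂ {v₁, v₂, b₁, b₂}) (h2 : a₂ ∈ Submodule.span ℂ {v₁, v₂, b₁, b₂}) :
    MS P ≤ MS Q := by
  trans Submodule.span ℂ {v₁, v₂, b₁, b₂}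
  · rw [MS_eq (rankS_two hP hv₁ hv₂ ha₁ ha₂ h)]
    refine iSup_le ?_
    rintro ⟨⟨a, b⟩, ha, hb, he⟩
    simp only [Fin.sum_univ_two] at he ha hb
    have key : ∀ x y z w : MvPolynomial σ ℂ, IsLinForm x → IsLinForm y → IsLinForm z →
        IsLinForm w → P = x * y + z * w → x ∈ Submodule.span ℂ {v₁, v₂, b₁, b₂} := by
      intro x y z w hx hy hz hw hPe
      by_contra hn
      obtain ⟨f, hf, hk⟩ := Submodule.exists_le_ker_of_notMem hn
      obtain ⟨D, hD⟩ := exists_der f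
      apply hf
      refine der_kill hP hx hy hz hw hPe f D hD ?_
      have e1 : f v₁ = 0 := hk (Submodule.subset_span (by simp))
      have e2 : f v₂ = 0 := hk (Submodule.subset_span (by simp))
      have e3 : f a₁ = 0 := hk h1
      have e4 : f a₂ = 0 := hk h2
      rw [h]
      simp [Derivation.leibniz, hD _ hv₁, hD _ hv₂, hD _ ha₁, hD _ ha₂, e1, e2, e3, e4]
    rw [Submodule.span_le]
    rintro x (⟨i, rfl⟩ | ⟨i, rfl⟩)
    · fin_cases i
      · exact key _ _ _ _ (ha 0) (hb 0) (ha 1) (hb 1) he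
      · exact key _ _ _ _ (ha 1) (hb 1) (ha 0) (hb 0)
          (show P = a 1 * b 1 + a 0 * b 0 by linear_combination he)
    · fin_cases i
      · exact key _ _ _ _ (hb 0) (ha 0) (ha 1) (hb 1)
          (show P = b 0 * a 0 + a 1 * b 1 by linear_combination he)
      · exact key _ _ _ _ (hb 1) (ha 1) (ha 0) (hb 0)
          (show P = b 1 * a 1 + a 0 * b 0 by linear_combination he)
  · rw [MS_eq (rankS_two hQ hv₁ hv₂ hb₁ hb₂ h')]
    refine le_trans ?_ (le_iSup _ ⟨(![v₁, v₂], ![b₁, b₂]),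
      by simp [Fin.forall_fin_two, hv₁, hv₂], by simp [Fin.forall_fin_two, hb₁, hb₂],
      by simp [h']⟩)
    apply Submodule.span_mono
    rintro x (rfl | rfl | rfl | rfl)
    · exact Or.inl ⟨0, rfl⟩
    · exact Or.inl ⟨1, rfl⟩
    · exact Or.inr ⟨0, rfl⟩
    · exact Or.inr ⟨1, rfl⟩

lemma half {σ : Type*} (P Q T v₁ v₂ a₁ a₂ b₁ b₂ t₁ t₂ : MvPolynomial σ ℂ)
    (hPirr : Irreducible P) (hQirr : Irreducible Q)
    (hrad : T ∈ (Ideal.span {P, Q}).radical)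
    (hv₁ : IsLinForm v₁) (hv₂ : IsLinForm v₂) (ha₁ : IsLinForm a₁) (ha₂ : IsLinForm a₂)
    (hb₁ : IsLinForm b₁) (hb₂ : IsLinForm b₂) (ht₁ : IsLinForm t₁) (ht₂ : IsLinForm t₂)
    (hP : P = v₁ * a₁ + v₂ * a₂) (hQ : Q = v₁ * b₁ + v₂ * b₂) (hT : T = v₁ * t₁ + v₂ * t₂)
    (hTspan : T ∉ Submodule.span ℂ ({P, Q} : Set (MvPolynomial σ ℂ)))
    (h : a₁ ∉ Submodule.span ℂ ({v₁, v₂, b₁, b₂} : Set (MvPolynomial σ ℂ))) :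
    ∃ c : ℂ, Concl P Q T (v₁ + C c * v₂) v₂ := by
  obtain ⟨f, hf, hk⟩ := Submodule.exists_le_ker_of_notMem h
  have e1 : f v₁ = 0 := hk (Submodule.subset_span (by simp))
  have e2 : f v₂ = 0 := hk (Submodule.subset_span (by simp))
  have e3 : f b₁ = 0 := hk (Submodule.subset_span (by simp))
  have e4 : f b₂ = 0 := hk (Submodule.subset_span (by simp))
  set c := f a₂ / f a₁ with hc
  refine ⟨c, ?_⟩
  refine core P Q T (v₁ + C c * v₂) v₂ a₁ (a₂ - C c * a₁) b₁ (b₂ - C c * b₁) t₁ (t₂ - C c * t₁)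
    hPirr hQirr hrad (lin_add hv₁ (lin_C _ hv₂)) hv₂ ha₁ (lin_sub ha₂ (lin_C _ ha₁)) hb₁
    (lin_sub hb₂ (lin_C _ hb₁)) ht₁ (lin_sub ht₂ (lin_C _ ht₁)) (by rw [hP]; ring)
    (by rw [hQ]; ring) (by rw [hT]; ring) hTspan ((f a₁)⁻¹ • f) ?_ ?_ ?_ ?_ ?_ ?_
  · simp [← smul_eq_C_mul, e1, e2]
  · simp [e2]
  · simp [e3]
  · simp [← smul_eq_C_mul, e3, e4]
  · simp [hf]
  · simp only [← smul_eq_C_mul, LinearMap.smul_apply, map_sub, map_smul, smul_eq_mul, hc]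
    field_simp
    ring

/-- strengthening of case (iii): under the stated hypotheses there are
linear forms `v₁', v₂' ∈ span{v₁,v₂}` and `ℓ, u` such that, up to nonzero constants,
`P = v₁'ℓ + v₂'²`, `Q = v₁'u − v₂'²` and `T = v₂'(ℓ+u) + αP + βQ`. -/
theorem stmt_12 {n : ℕ} (P Q T v₁ v₂ : MvPolynomial (Fin n) ℂ)
    (hP2 : P.IsHomogeneous 2) (hQ2 : Q.IsHomogeneous 2) (hT2 : T.IsHomogeneous 2)
    (hPirr : Irreducible P) (hQirr : Irreducible Q) (hTirr : Irreducible T)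
    (hrad : T ∈ (Ideal.span {P, Q}).radical)
    (hv₁ : IsLinForm v₁) (hv₂ : IsLinForm v₂)
    (hPv : P ∈ Ideal.span ({v₁, v₂} : Set (MvPolynomial (Fin n) ℂ)))
    (hQv : Q ∈ Ideal.span ({v₁, v₂} : Set (MvPolynomial (Fin n) ℂ)))
    (hTv : T ∈ Ideal.span ({v₁, v₂} : Set (MvPolynomial (Fin n) ℂ)))
    (hTspan : T ∉ Submodule.span ℂ ({P, Q} : Set (MvPolynomial (Fin n) ℂ)))
    (hnosq : ¬ ∃ (α β : ℂ) (ℓ : MvPolynomial (Fin n) ℂ),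
      (α, β) ≠ (0, 0) ∧ IsLinForm ℓ ∧ α • P + β • Q = ℓ ^ 2)
    (hMS : ¬ MS P ≤ MS Q) :
    ∃ v₁' v₂' : MvPolynomial (Fin n) ℂ,
      v₁' ∈ Submodule.span ℂ ({v₁, v₂} : Set (MvPolynomial (Fin n) ℂ)) ∧
      v₂' ∈ Submodule.span ℂ ({v₁, v₂} : Set (MvPolynomial (Fin n) ℂ)) ∧
      ∃ ℓ u : MvPolynomial (Fin n) ℂ, IsLinForm ℓ ∧ IsLinForm u ∧
      ∃ (α β c₁ c₂ c₃ : ℂ), c₁ ≠ 0 ∧ c₂ ≠ 0 ∧ c₃ ≠ 0 ∧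
        c₁ • P = v₁' * ℓ + v₂' ^ 2 ∧
        c₂ • Q = v₁' * u - v₂' ^ 2 ∧
        c₃ • T = v₂' * (ℓ + u) + α • P + β • Q := by
  obtain ⟨a₁, a₂, ha₁, ha₂, hP⟩ := aux_pair P v₁ v₂ hP2 hv₁ hv₂ hPv
  obtain ⟨b₁, b₂, hb₁, hb₂, hQ⟩ := aux_pair Q v₁ v₂ hQ2 hv₁ hv₂ hQv
  obtain ⟨t₁, t₂, ht₁, ht₂, hT⟩ := aux_pair T v₁ v₂ hT2 hv₁ hv₂ hTv
  have h1 : v₁ ∈ Submodule.span ℂ ({v₁, v₂} : Set (MvPolynomial (Fin n) ℂ)) :=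
    Submodule.subset_span (by simp)
  have h2 : v₂ ∈ Submodule.span ℂ ({v₁, v₂} : Set (MvPolynomial (Fin n) ℂ)) :=
    Submodule.subset_span (by simp)
  by_cases h : a₁ ∈ Submodule.span ℂ ({v₁, v₂, b₁, b₂} : Set (MvPolynomial (Fin n) ℂ))
  · have h' : a₂ ∉ Submodule.span ℂ ({v₂, v₁, b₂, b₁} : Set (MvPolynomial (Fin n) ℂ)) := by
      intro h'
      refine hMS (MS_le hPirr hQirr hv₁ hv₂ ha₁ ha₂ hb₁ hb₂ hP hQ h ?_)
      rwa [Set.insert_comm, Set.pair_comm b₁ b₂]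
    obtain ⟨c, hc⟩ := half P Q T v₂ v₁ a₂ a₁ b₂ b₁ t₂ t₁ hPirr hQirr hrad hv₂ hv₁ ha₂ ha₁ hb₂ hb₁
      ht₂ ht₁ (by rw [hP]; ring) (by rw [hQ]; ring) (by rw [hT]; ring) hTspan h'
    exact ⟨v₂ + C c * v₁, v₁, add_mem h2 (smul_eq_C_mul v₁ c ▸ Submodule.smul_mem _ c h1), h1, hc⟩
  · obtain ⟨c, hc⟩ := half P Q T v₁ v₂ a₁ a₂ b₁ b₂ t₁ t₂ hPirr hQirr hrad hv₁ hv₂ ha₁ ha₂ hb₁ hb₂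
      ht₁ ht₂ hP hQ hT hTspan h
    exact ⟨v₁ + C c * v₂, v₂, add_mem h1 (smul_eq_C_mul v₂ c ▸ Submodule.smul_mem _ c h2), h2, hc⟩
end
end

section
/- Let 0 < δ ≤ 1, let W ⊂ C^n be an r-dimensional subspace, let 𝒲 ⊂ W and 𝒦 ⊂ C^n \ W be finite sets such that no two vectors in 𝒯 = 𝒦 ∪ 𝒲 are linearly dependent. Suppose every p ∈ 𝒦 satisfies: for at least a δ fraction of the points q ∈ 𝒯, the span of p and q contains a point of 𝒯 \ {p, q}. Then dim(span(𝒯)) ≤ O(r + 1/δ), i.e., there is a universal constant C such that dim(span(𝒯)) ≤ C(r + 1/δ). -/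
section aux
open Finset

/-- Approximate matrix scaling. -/
lemma aux_scaling {ι R : Type} [Fintype ι] [Fintype R] [DecidableEq ι]
    (b : R → ι → ℝ) (hb : ∀ r c, 0 ≤ b r c) (w : R → ℝ) (hw : ∀ r, 0 ≤ w r)
    (π : R → ι) (hπ : ∀ r, 0 < b r (π r))
    (hsum : ∀ p, ∑ r, (if π r = p then w r else 0) = 1) (η : ℝ) (hη : 0 < η) :
    ∃ x : ι → ℝ, (∀ c, 0 < x c) ∧
      ∑ c, (∑ r, w r * (b r c * x c / ∑ c', b r c' * x c') - 1) ^ 2 ≤ η := by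
  classical
  set S : R → (ι → ℝ) → ℝ := fun r t => ∑ c, b r c * Real.exp (t c) with hS
  have hSge : ∀ r t, b r (π r) * Real.exp (t (π r)) ≤ S r t := fun r t =>
    Finset.single_le_sum (f := fun c => b r c * Real.exp (t c))
      (fun c _ => mul_nonneg (hb r c) (Real.exp_pos _).le) (mem_univ (π r))
  have hSpos : ∀ r t, 0 < S r t := fun r t =>
    lt_of_lt_of_le (mul_pos (hπ r) (Real.exp_pos _)) (hSge r t)
  set g : (ι → ℝ) → ℝ := fun t => ∑ r, w r * Real.log (S r t) - ∑ c, t c with hg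
  set C0 : ℝ := ∑ r, w r * Real.log (b r (π r)) with hC0
  have hswap : ∀ t : ι → ℝ, ∑ r, w r * t (π r) = ∑ c, t c := by
    intro t
    have : ∀ c, t c = ∑ r, (if π r = c then w r else 0) * t c := by
      intro c; rw [← Finset.sum_mul, hsum, one_mul]
    rw [Finset.sum_congr rfl (fun c _ => this c), Finset.sum_comm]
    refine Finset.sum_congr rfl fun r _ => ?_
    simp
  have hglb : ∀ t, C0 ≤ g t := by
    intro t
    have h1 : ∑ r, w r * (Real.log (b r (π r)) + t (π r)) ≤ ∑ r, w r * Real.log (S r t) := by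
      refine Finset.sum_le_sum fun r _ => mul_le_mul_of_nonneg_left ?_ (hw r)
      have := Real.log_le_log (mul_pos (hπ r) (Real.exp_pos _)) (hSge r t)
      rwa [Real.log_mul (hπ r).ne' (Real.exp_pos _).ne', Real.log_exp] at this
    simp only [mul_add, Finset.sum_add_distrib, hswap] at h1
    simp only [hg, hC0]; linarith
  set K : ℝ := g 0 - C0 with hK
  have hK0 : 0 ≤ K := by have := hglb 0; simp only [hK]; linarith
  set ε : ℝ := η / (4 * (K + 1)) with hε
  have hεpos : 0 < ε := by positivity
  have hεK : 4 * ε * K ≤ η := by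
    rw [hε]; 
    have : 4 * (η / (4 * (K + 1))) * K = η * (K / (K + 1)) := by field_simp
    rw [this]
    have : K / (K+1) ≤ 1 := by rw [div_le_one (by positivity)]; linarith
    nlinarith
  set f : (ι → ℝ) → ℝ := fun t => g t + ε * ∑ c, t c ^ 2 with hf
  have hgcont : Continuous g := by
    simp only [hg]
    refine Continuous.sub (continuous_finsetSum _ fun r _ => Continuous.mul continuous_const ?_) (by fun_prop)
    refine Continuous.log ?_ (fun t => (hSpos r t).ne')
    simp only [hS]; fun_prop
  have hfcont : Continuous f := by simp only [hf]; fun_prop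
  -- coercive
  set B : Set (ι → ℝ) := Metric.closedBall 0 (Real.sqrt (K / ε)) with hB
  have hout : ∀ t, f t ≤ f 0 → ∑ c, t c ^ 2 ≤ K / ε := by
    intro t ht
    have h0 : f 0 = g 0 := by simp [hf]
    have := hglb t
    rw [le_div_iff₀ hεpos]
    have : f t = g t + ε * ∑ c, t c ^ 2 := rfl
    simp only [hK]; linarith
  obtain ⟨t, htB, htmin⟩ := (isCompact_closedBall (0 : ι → ℝ) (Real.sqrt (K / ε))).exists_isMinOn
    ⟨0, by simp⟩ hfcont.continuousOn
  have hmem0 : (0 : ι → ℝ) ∈ Metric.closedBall (0 : ι → ℝ) (Real.sqrt (K / ε)) := by simp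
  have hmin : ∀ s, f t ≤ f s := by
    intro s
    by_cases hs : f s ≤ f 0
    · apply htmin
      rw [mem_closedBall_zero_iff, pi_norm_le_iff_of_nonneg (Real.sqrt_nonneg _)]
      intro c
      rw [Real.norm_eq_abs]
      apply Real.abs_le_sqrt
      exact (Finset.single_le_sum (f := fun c => s c ^ 2) (fun _ _ => sq_nonneg _) (mem_univ c)).trans
        (hout s hs)
    · exact (htmin hmem0).trans (le_of_lt (not_le.1 hs))
  have htsq := hout t (hmin 0)
  -- derivative
  have hder : ∀ c, ∑ r, w r * (b r c * Real.exp (t c) / S r t) - 1 + 2 * ε * t c = 0 := by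
    intro c
    set F : ℝ → ℝ := fun s => f (Function.update t c s) with hF
    have hFmin : IsLocalMin F (t c) := by
      refine Filter.Eventually.of_forall fun s => ?_
      simp only [hF, Function.update_eq_self]; exact hmin _
    have hupd : ∀ c', HasDerivAt (fun s => Function.update t c s c') (if c' = c then 1 else 0) (t c) := by
      intro c'
      by_cases h : c' = c
      · subst h; simpa using hasDerivAt_id' (t c')
      · simpa [h, Function.update_of_ne h] using hasDerivAt_const (t c) (t c')
    have hSd : ∀ r, HasDerivAt (fun s => S r (Function.update t c s)) (b r c * Real.exp (t c)) (t c) := by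
      intro r
      have : HasDerivAt (fun s => ∑ c', b r c' * Real.exp (Function.update t c s c'))
          (∑ c', b r c' * (Real.exp (Function.update t c (t c) c') * (if c' = c then 1 else 0))) (t c) :=
        HasDerivAt.fun_sum fun c' _ => ((hupd c').exp).const_mul _
      simpa using this
    have hd : HasDerivAt F ((∑ r, w r * (b r c * Real.exp (t c) / S r (Function.update t c (t c)))
        - ∑ c', (if c' = c then 1 else 0)) + ε * ∑ c', (2 * (Function.update t c (t c) c') ^ (2-1) * (if c' = c then 1 else 0))) (t c) := by
      refine HasDerivAt.add (HasDerivAt.sub (HasDerivAt.fun_sum fun r _ => ?_) (HasDerivAt.fun_sum fun c' _ => hupd c'))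
        (HasDerivAt.const_mul _ (HasDerivAt.fun_sum fun c' _ => ?_))
      · exact ((hSd r).log (hSpos _ _).ne').const_mul _
      · exact_mod_cast (hupd c').pow 2
    have := hFmin.hasDerivAt_eq_zero hd
    simp at this
    linarith
  refine ⟨fun c => Real.exp (t c), fun c => Real.exp_pos _, ?_⟩
  have : ∀ c, (∑ r, w r * (b r c * Real.exp (t c) / ∑ c', b r c' * Real.exp (t c')) - 1) ^ 2
      = 4 * ε ^ 2 * t c ^ 2 := by
    intro c
    have h := hder c
    have h2 : ∑ r, w r * (b r c * Real.exp (t c) / ∑ c', b r c' * Real.exp (t c')) - 1 = - (2 * ε * t c) := by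
      simp only [hS] at h; linarith
    rw [h2]; ring
  rw [Finset.sum_congr rfl fun c _ => this c, ← Finset.mul_sum]
  have : 4 * ε ^ 2 * ∑ c, t c ^ 2 ≤ 4 * ε ^ 2 * (K / ε) := by gcongr
  have h3 : 4 * ε ^ 2 * (K / ε) = 4 * ε * K := by field_simp
  linarith

/-- trace / Frobenius bound -/
lemma aux_frob {ι : Type} [Fintype ι] (G : ι → ι → ℂ) (X : Submodule ℂ (ι → ℂ))
    (hX : ∀ x ∈ X, ∀ p, ∑ q, G p q * x q = x p) :
    (Module.finrank ℂ X : ℝ) ≤ ∑ p, ∑ q, ‖G p q‖ ^ 2 := by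
  classical
  let e := (WithLp.linearEquiv 2 ℂ (ι → ℂ))
  let Y : Submodule ℂ (EuclideanSpace ℂ ι) := X.comap e.toLinearMap
  have hY : Module.finrank ℂ Y = Module.finrank ℂ X := by
    have h : Y = X.map (e.symm : (ι → ℂ) →ₗ[ℂ] _) := Submodule.comap_equiv_eq_map_symm e X
    rw [h]
    exact LinearEquiv.finrank_map_eq e.symm X
  let v := stdOrthonormalBasis ℂ Y
  have hv : Orthonormal ℂ (fun i => (v i : EuclideanSpace ℂ ι)) :=
    v.orthonormal.comp_linearIsometry Y.subtypeₗᵢ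
  let row : ι → EuclideanSpace ℂ ι := fun p => WithLp.toLp 2 (fun q => star (G p q))
  have hrow : ∀ p i, inner ℂ (row p) (v i : EuclideanSpace ℂ ι) = (v i : EuclideanSpace ℂ ι) p := by
    intro p i
    have := hX (e (v i : EuclideanSpace ℂ ι)) (v i).2 p
    simp only [PiLp.inner_apply, row]
    refine Eq.trans ?_ this
    refine Finset.sum_congr rfl fun q _ => ?_
    simp [e, mul_comm]
  have hnorm : ∀ p, ‖row p‖ ^ 2 = ∑ q, ‖G p q‖ ^ 2 := by
    intro p; rw [EuclideanSpace.norm_sq_eq]; simp [row]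
  rw [← hY]
  calc (Module.finrank ℂ Y : ℝ) = ∑ i : Fin (Module.finrank ℂ Y), (1:ℝ) := by simp
    _ = ∑ i, ∑ p, ‖(v i : EuclideanSpace ℂ ι) p‖ ^ 2 := by
        refine Finset.sum_congr rfl fun i _ => ?_
        rw [← EuclideanSpace.norm_sq_eq, hv.1 i]; norm_num
    _ = ∑ p, ∑ i, ‖inner ℂ (v i : EuclideanSpace ℂ ι) (row p)‖ ^ 2 := by
        rw [Finset.sum_comm]
        refine Finset.sum_congr rfl fun p _ => Finset.sum_congr rfl fun i _ => ?_
        rw [norm_inner_symm, hrow]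
    _ ≤ ∑ p, ‖row p‖ ^ 2 := Finset.sum_le_sum fun p _ => hv.sum_inner_products_le (row p)
    _ = _ := Finset.sum_congr rfl fun p _ => hnorm p

/-- weighted design matrix rank bound -/
lemma aux_design {ι R : Type} [Fintype ι] [Fintype R] [DecidableEq ι]
    (A : R → ι → ℂ) (w : R → ℝ) (hw : ∀ r, 0 ≤ w r)
    (π : R → ι) (hπ : ∀ r, A r (π r) ≠ 0)
    (hsum : ∀ p, ∑ r, (if π r = p then w r else 0) = 1) (τ : ℝ)
    (hτ : ∀ p q, p ≠ q → ∑ r, (if A r p ≠ 0 ∧ A r q ≠ 0 then w r else 0) ≤ τ)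
    (hτ0 : 0 ≤ τ)
    (X : Submodule ℂ (ι → ℂ))
    (hX : ∀ x ∈ X, ∀ r, w r ≠ 0 → ∑ c, A r c * x c = 0) :
    (Module.finrank ℂ X : ℝ) ≤ τ * Fintype.card ι := by
  classical
  refine le_of_forall_pos_le_add fun η hη => ?_
  obtain ⟨x, hx, hxη⟩ := aux_scaling (fun r c => ‖A r c‖ ^ 2) (fun r c => by positivity) w hw π
    (fun r => by have := hπ r; positivity) hsum η hη
  set S : R → ℝ := fun r => ∑ c, ‖A r c‖ ^ 2 * x c with hS
  have hSpos : ∀ r, 0 < S r := fun r => by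
    have h1 : ‖A r (π r)‖ ^ 2 * x (π r) ≤ S r :=
      Finset.single_le_sum (f := fun c => ‖A r c‖ ^ 2 * x c)
      (fun c _ => mul_nonneg (by positivity) (hx c).le) (mem_univ (π r))
    have h2 : 0 < ‖A r (π r)‖ := norm_pos_iff.2 (hπ r)
    have := hx (π r)
    exact lt_of_lt_of_le (by positivity) h1
  set y : ι → ℝ := fun c => Real.sqrt (x c) with hy
  have hypos : ∀ c, 0 < y c := fun c => Real.sqrt_pos.2 (hx c)
  have hysq : ∀ c, y c ^ 2 = x c := fun c => Real.sq_sqrt (hx c).le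
  -- scaled matrix
  set M : ι → ι → ℂ := fun p q => ∑ r, ((w r / S r * y p * y q : ℝ) : ℂ) * (star (A r p) * A r q) with hM
  set G : ι → ι → ℂ := fun p q => (if p = q then 1 else 0) - M p q with hG
  -- transported subspace
  have hyne : ∀ c, (y c : ℂ) ≠ 0 := fun c => by exact_mod_cast (hypos c).ne'
  let e : (ι → ℂ) ≃ₗ[ℂ] (ι → ℂ) :=
    LinearEquiv.piCongrRight fun c => LinearEquiv.smulOfNeZero ℂ ℂ (y c : ℂ) (hyne c)
  have he : ∀ z c, e z c = y c * z c := fun z c => rfl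
  let Y : Submodule ℂ (ι → ℂ) := X.map (e.symm : (ι → ℂ) →ₗ[ℂ] _)
  have hYX : Module.finrank ℂ Y = Module.finrank ℂ X := LinearEquiv.finrank_map_eq e.symm X
  have hYmem : ∀ z ∈ Y, e z ∈ X := by
    rintro z ⟨a, ha, rfl⟩
    simpa using ha
  have hfro := aux_frob G Y (by
    intro z hz p
    have hzX := hX _ (hYmem z hz)
    have hM0 : ∑ q, M p q * z q = 0 := by
      simp only [hM, Finset.sum_mul]
      rw [Finset.sum_comm]
      refine Finset.sum_eq_zero fun r _ => ?_
      by_cases hwr : w r = 0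
      · simp [hwr]
      have h := hzX r hwr
      simp only [he] at h
      have : ∀ q, ((w r / S r * y p * y q : ℝ) : ℂ) * (star (A r p) * A r q) * z q
          = ((w r / S r * y p : ℝ) : ℂ) * star (A r p) * (A r q * (y q * z q)) := by
        intro q; push_cast; ring
      rw [Finset.sum_congr rfl fun q _ => this q, ← Finset.mul_sum, h, mul_zero]
    simp only [hG, sub_mul, Finset.sum_sub_distrib, hM0]
    simp)
  rw [hYX] at hfro
  set β : R → ι → ℝ := fun r c => ‖A r c‖ ^ 2 * x c / S r with hβ
  have hβ0 : ∀ r c, 0 ≤ β r c := fun r c =>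
    div_nonneg (mul_nonneg (by positivity) (hx c).le) (hSpos r).le
  have hβ1 : ∀ r, ∑ c, β r c = 1 := fun r => by
    simp only [hβ]; rw [← Finset.sum_div]; exact div_self (hSpos r).ne'
  have hdiag : ∀ p, ‖G p p‖ ^ 2 = (∑ r, w r * β r p - 1) ^ 2 := by
    intro p
    have h1 : M p p = ((∑ r, w r * β r p : ℝ) : ℂ) := by
      simp only [hM, hβ]
      rw [Complex.ofReal_sum]
      refine Finset.sum_congr rfl fun r _ => ?_
      have h2 : star (A r p) * A r p = ((‖A r p‖ ^ 2 : ℝ) : ℂ) := by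
        rw [Complex.star_def, mul_comm, Complex.mul_conj, Complex.normSq_eq_norm_sq]
      rw [h2, ← Complex.ofReal_mul]
      congr 1
      have := hysq p
      rw [← this]; ring
    have h3 : G p p = ((1 - ∑ r, w r * β r p : ℝ) : ℂ) := by
      simp only [hG, h1]; push_cast; simp
    rw [h3, Complex.norm_real, Real.norm_eq_abs, sq_abs]; ring
  have hoff : ∀ p q, p ≠ q → ‖G p q‖ ^ 2 ≤ τ * ∑ r, w r * (β r p * β r q) := by
    intro p q hpq
    have h1 : ‖G p q‖ ≤ ∑ r, (if A r p ≠ 0 ∧ A r q ≠ 0 then Real.sqrt (w r) else 0) *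
        (Real.sqrt (w r) * (‖A r p‖ * y p * (‖A r q‖ * y q) / S r)) := by
      simp only [hG, hpq, if_false, zero_sub, norm_neg, hM]
      refine (norm_sum_le _ _).trans (Finset.sum_le_sum fun r _ => ?_)
      by_cases h : A r p ≠ 0 ∧ A r q ≠ 0
      · rw [if_pos h, ← mul_assoc (Real.sqrt (w r)), Real.mul_self_sqrt (hw r), norm_mul, norm_mul, norm_star,
          Complex.norm_real, Real.norm_of_nonneg]
        · apply le_of_eq; ring
        · have := hSpos r; have := hw r; have := hypos p; have := hypos q; positivity
      · rw [if_neg h]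
        have : star (A r p) * A r q = 0 := by
          by_cases h1 : A r p = 0
          · simp [h1]
          · have : A r q = 0 := by by_contra h2; exact h ⟨h1, h2⟩
            simp [this]
        rw [this]; simp
    have h2 := Finset.sum_mul_sq_le_sq_mul_sq (univ : Finset R)
      (fun r => if A r p ≠ 0 ∧ A r q ≠ 0 then Real.sqrt (w r) else 0)
      (fun r => Real.sqrt (w r) * (‖A r p‖ * y p * (‖A r q‖ * y q) / S r))
    have h3 : ∑ r, (if A r p ≠ 0 ∧ A r q ≠ 0 then Real.sqrt (w r) else 0) ^ 2 ≤ τ := by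
      refine le_trans (le_of_eq ?_) (hτ p q hpq)
      refine Finset.sum_congr rfl fun r _ => ?_
      split_ifs
      · exact Real.sq_sqrt (hw r)
      · simp
    have h4 : ∑ r, (Real.sqrt (w r) * (‖A r p‖ * y p * (‖A r q‖ * y q) / S r)) ^ 2
        = ∑ r, w r * (β r p * β r q) := by
      refine Finset.sum_congr rfl fun r _ => ?_
      rw [mul_pow, Real.sq_sqrt (hw r)]
      simp only [hβ, ← hysq]
      have := (hSpos r).ne'
      field_simp
    calc ‖G p q‖ ^ 2 ≤ _ := pow_le_pow_left₀ (norm_nonneg _) h1 2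
      _ ≤ _ := h2
      _ ≤ _ := by
        rw [h4]
        refine mul_le_mul_of_nonneg_right h3 (Finset.sum_nonneg fun r _ => ?_)
        exact mul_nonneg (hw r) (mul_nonneg (hβ0 _ _) (hβ0 _ _))
  have hwsum : ∑ r, w r = Fintype.card ι := by
    have : ∑ p, ∑ r, (if π r = p then w r else 0) = ∑ r, w r := by
      rw [Finset.sum_comm]; simp
    rw [← this, Finset.sum_congr rfl fun p _ => hsum p]; simp
  refine hfro.trans ?_
  have hall : ∀ p q, ‖G p q‖ ^ 2 ≤ (if p = q then (∑ r, w r * β r p - 1) ^ 2 else 0) +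
      τ * ∑ r, w r * (β r p * β r q) := by
    intro p q
    by_cases h : p = q
    · subst h
      rw [if_pos rfl, hdiag]
      have : 0 ≤ τ * ∑ r, w r * (β r p * β r p) := mul_nonneg hτ0 (Finset.sum_nonneg fun r _ =>
        mul_nonneg (hw r) (mul_nonneg (hβ0 _ _) (hβ0 _ _)))
      linarith
    · rw [if_neg h, zero_add]; exact hoff p q h
  refine (Finset.sum_le_sum fun p _ => Finset.sum_le_sum fun q _ => hall p q).trans ?_
  simp only [Finset.sum_add_distrib]
  have h5 : ∑ p, ∑ q, τ * ∑ r, w r * (β r p * β r q) = τ * Fintype.card ι := by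
    simp only [← Finset.mul_sum]
    congr 1
    rw [← hwsum]
    have : ∀ p, ∑ q, ∑ r, w r * (β r p * β r q) = ∑ r, w r * β r p := by
      intro p
      rw [Finset.sum_comm]
      refine Finset.sum_congr rfl fun r _ => ?_
      rw [← Finset.mul_sum, ← Finset.mul_sum, hβ1, mul_one]
    rw [Finset.sum_congr rfl fun p _ => this p, Finset.sum_comm]
    refine Finset.sum_congr rfl fun r _ => ?_
    rw [← Finset.mul_sum, hβ1, mul_one]
  rw [h5]
  have h6 : ∑ p, ∑ q, (if p = q then (∑ r, w r * β r p - 1) ^ 2 else 0) ≤ η := by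
    simpa using hxη
  linarith

/-- combinatorial version -/
lemma aux_comb {ι : Type} [Fintype ι] [DecidableEq ι]
    {E : Type} [AddCommGroup E] [Module ℂ E] [FiniteDimensional ℂ E]
    (u : ι → E) (L : ι → Prop) (D : ι → ι → ι → Prop)
    (hne : ∀ p q t, D p q t → p ≠ q ∧ p ≠ t ∧ q ≠ t)
    (hs1 : ∀ p q t, D p q t → D q p t) (hs2 : ∀ p q t, D p q t → D p t q)
    (hex : ∀ p q t s, D p q t → D p q s → s ≠ t → D p t s)
    (hu : ∀ p q t, D p q t → ∃ α β : ℂ, u p = α • u q + β • u t)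
    (hL : ∀ p, ¬ L p → u p = 0)
    (N : ℝ) (hN : 0 < N)
    (hdeg : ∀ p, L p → N ≤ ({q | ∃ t, D p q t} : Set ι).ncard) :
    (Module.finrank ℂ (Submodule.span ℂ (Set.range u)) : ℝ) ≤ 6 / N * Fintype.card ι := by
  classical
  -- the subspace
  let Φ : Module.Dual ℂ E →ₗ[ℂ] (ι → ℂ) := LinearMap.pi fun i => Module.Dual.eval ℂ E (u i)
  have hΦ : ∀ f i, Φ f i = f (u i) := fun f i => rfl
  have hker : LinearMap.ker Φ = (Submodule.span ℂ (Set.range u)).dualAnnihilator := by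
    ext f
    rw [LinearMap.mem_ker, Submodule.mem_dualAnnihilator]
    constructor
    · intro h v hv
      have : Submodule.span ℂ (Set.range u) ≤ LinearMap.ker f := by
        rw [Submodule.span_le]
        rintro _ ⟨i, rfl⟩
        exact congrFun h i
      exact this hv
    · intro h
      ext i
      exact h _ (Submodule.subset_span ⟨i, rfl⟩)
  have hrk : Module.finrank ℂ (LinearMap.range Φ) = Module.finrank ℂ (Submodule.span ℂ (Set.range u)) := by
    have h1 := LinearMap.finrank_range_add_finrank_ker Φ
    have h2 := Subspace.finrank_add_finrank_dualAnnihilator_eq (Submodule.span ℂ (Set.range u))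
    rw [hker, Subspace.dual_finrank_eq] at h1
    omega
  rw [← hrk]
  choose! α β hαβ using hu
  let c : ι → ι → ℕ := fun p q => (univ.filter fun t => D p q t).card
  have hcpos : ∀ p q t, D p q t → 0 < c p q := fun p q t h =>
    Finset.card_pos.2 ⟨t, by simpa using h⟩
  have hc1 : ∀ p q, c p q = c q p := by
    intro p q
    simp only [c]; congr 1; ext t; simp; exact ⟨hs1 _ _ _, hs1 _ _ _⟩
  have hc2 : ∀ p q t, D p q t → c p t = c p q := by
    intro p q t h
    have : (univ.filter fun s => D p t s) = insert q ((univ.filter fun s => D p q s).erase t) := by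
      ext s
      simp only [mem_filter, mem_univ, true_and, mem_insert, mem_erase]
      constructor
      · intro h1
        by_cases hsq : s = q
        · exact Or.inl hsq
        · refine Or.inr ⟨(hne _ _ _ h1).2.2.symm, ?_⟩
          exact hex p t q s (hs2 _ _ _ h) h1 hsq
      · rintro (rfl | ⟨h1, h2⟩)
        · exact hs2 _ _ _ h
        · exact hex _ _ _ _ h h2 h1
    simp only [c]
    rw [this, Finset.card_insert_of_notMem, Finset.card_erase_of_mem (by simpa using h)]
    · have := hcpos p q t h
      simp only [c] at this
      omega
    · intro h1
      simp only [mem_filter, mem_univ, true_and, mem_erase] at h1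
      exact (hne _ _ _ h1.2).2.2 rfl
  let g : ι → ι → ι → ℝ := fun p q t => if D p q t then 1 / (c p q : ℝ) else 0
  have hg0 : ∀ p q t, 0 ≤ g p q t := fun p q t => by
    simp only [g]; split_ifs <;> positivity
  have hg1 : ∀ p q t, g p q t = g q p t := by
    intro p q t
    simp only [g]
    rw [hc1 p q]
    exact if_congr ⟨hs1 _ _ _, hs1 _ _ _⟩ rfl rfl
  have hg2 : ∀ p q t, g p q t = g p t q := by
    intro p q t
    simp only [g]
    by_cases h : D p q t
    · rw [if_pos h, if_pos (hs2 _ _ _ h), hc2 p q t h]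
    · rw [if_neg h, if_neg (fun h' => h (hs2 _ _ _ h'))]
  have hgsum : ∀ p q, ∑ t, g p q t = if ∃ t, D p q t then 1 else 0 := by
    intro p q
    simp only [g]
    rw [← Finset.sum_filter, Finset.sum_const, nsmul_eq_mul]
    split_ifs with h
    · obtain ⟨t, ht⟩ := h
      have := hcpos p q t ht
      simp only [c] at this ⊢
      field_simp
    · have : (univ.filter fun t => D p q t) = ∅ := by
        ext t; simp; exact fun ht => h ⟨t, ht⟩
      rw [this]; simp
  let d : ι → ℕ := fun p => ({q | ∃ t, D p q t} : Set ι).ncard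
  have hd : ∀ p, (∑ q, ∑ t, g p q t) = d p := by
    intro p
    rw [Finset.sum_congr rfl fun q _ => hgsum p q]
    simp only [d, Set.ncard_eq_toFinset_card']
    simp
  set n : ℝ := (Fintype.card ι : ℝ) with hn
  let w : ι × ι × ι → ℝ := fun r =>
    if L r.1 then g r.1 r.2.1 r.2.2 / d r.1 else 1 / n ^ 2
  let A : ι × ι × ι → ι → ℂ := fun r =>
    if L r.1 ∧ D r.1 r.2.1 r.2.2 then
      Pi.single r.1 1 - Pi.single r.2.1 (α r.1 r.2.1 r.2.2) - Pi.single r.2.2 (β r.1 r.2.1 r.2.2)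
    else Pi.single r.1 1
  have hw0 : ∀ r, 0 ≤ w r := by
    intro r; simp only [w]; split_ifs
    · exact div_nonneg (hg0 _ _ _) (Nat.cast_nonneg _)
    · positivity
  refine aux_design A w hw0 (fun r => r.1) ?_ ?_ (6 / N) ?_ (by positivity) _ ?_
  · rintro ⟨p, q, t⟩
    simp only [A]
    split_ifs with h
    · obtain ⟨h1, h2, h3⟩ := hne _ _ _ h.2
      simp [h1, h2]
    · simp
  · intro p
    have hinner : ∑ r : ι × ι × ι, (if r.1 = p then w r else 0) = ∑ q, ∑ t, w (p, q, t) := by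
      rw [Fintype.sum_prod_type]
      rw [Finset.sum_eq_single p]
      · simp [Fintype.sum_prod_type]
      · intro b _ hb; simp [hb]
      · simp
    rw [hinner]
    simp only [w]
    by_cases hp : L p
    · simp only [hp, if_true]
      simp only [← Finset.sum_div]
      rw [hd]
      have := hdeg p hp
      exact div_self (by have : (0:ℝ) < d p := lt_of_lt_of_le hN this
                         exact this.ne')
    · simp only [hp, if_false]
      have : n ≠ 0 := by
        have : 0 < Fintype.card ι := Fintype.card_pos_iff.2 ⟨p⟩
        simp only [hn]; exact_mod_cast this.ne'
      simp only [Finset.sum_const, Finset.card_univ, nsmul_eq_mul]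
      rw [← hn]; field_simp
  · intro a b hab
    -- pointwise bound
    have hpt : ∀ r : ι × ι × ι, (if A r a ≠ 0 ∧ A r b ≠ 0 then w r else 0) ≤
        1 / N * ((if r.1 = a then if r.2.1 = b then g r.1 r.2.1 r.2.2 else 0 else 0)
        + (if r.1 = b then if r.2.1 = a then g r.1 r.2.1 r.2.2 else 0 else 0)
        + (if r.1 = a then if r.2.2 = b then g r.1 r.2.1 r.2.2 else 0 else 0)
        + (if r.1 = b then if r.2.2 = a then g r.1 r.2.1 r.2.2 else 0 else 0)
        + (if r.2.1 = a then if r.2.2 = b then g r.1 r.2.1 r.2.2 else 0 else 0)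
        + (if r.2.1 = b then if r.2.2 = a then g r.1 r.2.1 r.2.2 else 0 else 0)) := by
      rintro ⟨p, q, t⟩
      have h0 := hg0 p q t
      have hv : ∀ (P Q : Prop) [Decidable P] [Decidable Q], P → Q →
          (if P then if Q then g p q t else 0 else 0) = g p q t := by
        intro P Q _ _ hP hQ; rw [if_pos hP, if_pos hQ]
      have hi : ∀ (P Q : Prop) [Decidable P] [Decidable Q], 0 ≤ (if P then if Q then g p q t else 0 else 0) := by
        intro P Q _ _; split_ifs <;> simp [h0]
      by_cases hA : A (p,q,t) a ≠ 0 ∧ A (p,q,t) b ≠ 0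
      swap
      · rw [if_neg hA]
        refine mul_nonneg (by positivity) ?_
        have := hi (p = a) (q = b); have := hi (p = b) (q = a); have := hi (p = a) (t = b)
        have := hi (p = b) (t = a); have := hi (q = a) (t = b); have := hi (q = b) (t = a)
        dsimp only
        linarith
      rw [if_pos hA]
      by_cases hLD : L p ∧ D p q t
      · have hwle : w (p,q,t) ≤ 1 / N * g p q t := by
          simp only [w, hLD.1, if_true]
          rw [div_eq_mul_one_div, mul_comm]
          exact mul_le_mul_of_nonneg_right (one_div_le_one_div_of_le hN (hdeg p hLD.1)) h0
        refine hwle.trans (mul_le_mul_of_nonneg_left ?_ (by positivity))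
        have hmem : ∀ z, A (p,q,t) z ≠ 0 → p = z ∨ q = z ∨ t = z := by
          intro z hz
          by_contra hcon
          push Not at hcon
          apply hz
          simp only [A, hLD, and_self, if_true]
          simp [hcon.1.symm, hcon.2.1.symm, hcon.2.2.symm]
        have k1 := hi (p = a) (q = b); have k2 := hi (p = b) (q = a); have k3 := hi (p = a) (t = b)
        have k4 := hi (p = b) (t = a); have k5 := hi (q = a) (t = b); have k6 := hi (q = b) (t = a)
        dsimp only
        rcases hmem a hA.1 with ha | ha | ha <;> rcases hmem b hA.2 with hb | hb | hb
        · exact absurd (ha.symm.trans hb) hab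
        · have := hv (p = a) (q = b) ha hb; linarith
        · have := hv (p = a) (t = b) ha hb; linarith
        · have := hv (p = b) (q = a) hb ha; linarith
        · exact absurd (ha.symm.trans hb) hab
        · have := hv (q = a) (t = b) ha hb; linarith
        · have := hv (p = b) (t = a) hb ha; linarith
        · have := hv (q = b) (t = a) hb ha; linarith
        · exact absurd (ha.symm.trans hb) hab
      · exfalso
        obtain ⟨h1, h2⟩ := hA
        simp only [A, hLD, if_false] at h1 h2
        have e1 : a = p := by by_contra h; exact h1 (by simp [h])
        have e2 : b = p := by by_contra h; exact h2 (by simp [h])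
        exact hab (e1.trans e2.symm)
    refine (Finset.sum_le_sum fun r _ => hpt r).trans ?_
    rw [← Finset.mul_sum]
    have hle : ∀ p q, ∑ t, g p q t ≤ 1 := by
      intro p q; rw [hgsum]; split_ifs <;> norm_num
    have hle2 : ∀ p t, ∑ q, g p q t ≤ 1 := by
      intro p t; rw [Finset.sum_congr rfl fun q _ => hg2 p q t]; exact hle p t
    have hle3 : ∀ q t, ∑ p, g p q t ≤ 1 := by
      intro q t; rw [Finset.sum_congr rfl fun p _ => hg1 p q t]; exact hle2 q t
    have s1 : ∀ a b, ∑ r : ι × ι × ι, (if r.1 = a then if r.2.1 = b then g r.1 r.2.1 r.2.2 else 0 else 0) ≤ 1 := by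
      intro a b
      refine le_trans (le_of_eq ?_) (hle a b)
      rw [Fintype.sum_prod_type, Finset.sum_eq_single a (by intro z _ hz; simp [hz]) (by simp)]
      rw [Fintype.sum_prod_type, Finset.sum_eq_single b (by intro z _ hz; simp [hz]) (by simp)]
      simp
    have s2 : ∀ a b, ∑ r : ι × ι × ι, (if r.1 = a then if r.2.2 = b then g r.1 r.2.1 r.2.2 else 0 else 0) ≤ 1 := by
      intro a b
      refine le_trans (le_of_eq ?_) (hle2 a b)
      rw [Fintype.sum_prod_type, Finset.sum_eq_single a (by intro z _ hz; simp [hz]) (by simp)]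
      rw [Fintype.sum_prod_type]
      simp
    have s3 : ∀ a b, ∑ r : ι × ι × ι, (if r.2.1 = a then if r.2.2 = b then g r.1 r.2.1 r.2.2 else 0 else 0) ≤ 1 := by
      intro a b
      refine le_trans (le_of_eq ?_) (hle3 a b)
      rw [Fintype.sum_prod_type]
      refine Finset.sum_congr rfl fun p _ => ?_
      rw [Fintype.sum_prod_type, Finset.sum_eq_single a (by intro z _ hz; simp [hz]) (by simp)]
      simp
    simp only [Finset.sum_add_distrib]
    have : 6 / N = 1 / N * 6 := by ring
    rw [this]
    refine mul_le_mul_of_nonneg_left ?_ (by positivity)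
    have := s1 a b; have := s1 b a; have := s2 a b; have := s2 b a; have := s3 a b; have := s3 b a
    linarith
  · rintro _ ⟨f, rfl⟩ ⟨p, q, t⟩ hwr
    simp only [hΦ]
    by_cases hp : L p
    · have hD : D p q t := by
        by_contra h
        apply hwr
        simp [w, g, h, hp]
      simp only [A, hp, hD, and_self, if_true]
      have := hαβ p q t hD
      simp only [Pi.sub_apply, sub_mul, Finset.sum_sub_distrib, Pi.single_apply, ite_mul, zero_mul,
        Finset.sum_ite_eq', mem_univ, if_true]
      rw [this]; simp
    · simp only [A, hp, false_and, if_false]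
      simp [Pi.single_apply, hL p hp]

lemma aux_quot {V : Type} [AddCommGroup V] [Module ℂ V] [FiniteDimensional ℂ V]
    (W U : Submodule ℂ V) :
    Module.finrank ℂ U ≤ Module.finrank ℂ W + Module.finrank ℂ (U.map W.mkQ) := by
  have h := LinearMap.finrank_range_add_finrank_ker (W.mkQ.domRestrict U)
  have h1 : LinearMap.range (W.mkQ.domRestrict U) = U.map W.mkQ := by
    ext x; simp [Submodule.mem_map]
  have h2 : Module.finrank ℂ (LinearMap.ker (W.mkQ.domRestrict U)) ≤ Module.finrank ℂ W := by
    let φ : LinearMap.ker (W.mkQ.domRestrict U) →ₗ[ℂ] W :=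
      LinearMap.codRestrict W (U.subtype.comp (Submodule.subtype _)) (by
        rintro ⟨x, hx⟩
        simpa using hx)
    apply LinearMap.finrank_le_finrank_of_injective (f := φ)
    intro x y hxy
    have := congrArg Subtype.val hxy
    exact Subtype.ext (Subtype.ext this)
  rw [h1] at h
  omega

lemma aux_heavy {V : Type} [AddCommGroup V] [Module ℂ V] [FiniteDimensional ℂ V]
    (W : Submodule ℂ V) (K : Finset V) (hK : ∀ k ∈ K, k ∉ W)
    (H : Set V) (θ : ℝ) (hθ : 0 < θ)
    (hH : ∀ p ∈ H, θ ≤ ({t | t ∈ K ∧ t ∈ W ⊔ Submodule.span ℂ {p}} : Set V).ncard) :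
    (Module.finrank ℂ (W ⊔ Submodule.span ℂ H : Submodule ℂ V) : ℝ) ≤
      Module.finrank ℂ W + K.card / θ := by
  classical
  obtain ⟨b, hbH, hbspan, hbli⟩ := exists_linearIndependent ℂ (W.mkQ '' H)
  have hbfin : b.Finite := hbli.setFinite
  have := hbfin.fintype
  have hmap : (W ⊔ Submodule.span ℂ H).map W.mkQ = Submodule.span ℂ b := by
    rw [hbspan, Submodule.map_sup, Submodule.map_span, Submodule.mkQ_map_self, bot_sup_eq]
  have h1 := aux_quot W (W ⊔ Submodule.span ℂ H)
  rw [hmap, finrank_span_set_eq_card hbli] at h1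
  let F : (V ⧸ W) → Finset V := fun e => K.filter fun t => W.mkQ t ∈ Submodule.span ℂ {e}
  have hF : ∀ e ∈ b.toFinset, θ ≤ (F e).card := by
    intro e he
    obtain ⟨p, hp, rfl⟩ := hbH (by simpa using he)
    refine (hH p hp).trans ?_
    rw [Nat.cast_le, ← Set.ncard_coe_finset]
    apply Set.ncard_le_ncard _ (Finset.finite_toSet _)
    rintro t ⟨htK, ht⟩
    simp only [F, coe_filter, Set.mem_setOf_eq]
    refine ⟨htK, ?_⟩
    have := Submodule.mem_map_of_mem (f := W.mkQ) ht
    rwa [Submodule.map_sup, Submodule.map_span, Submodule.mkQ_map_self, bot_sup_eq, Set.image_singleton] at this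
  have hdis : (b.toFinset : Set (V ⧸ W)).PairwiseDisjoint F := by
    intro e he e' he' hne
    rw [Function.onFun, Finset.disjoint_left]
    intro t ht ht'
    simp only [F, mem_filter, Submodule.mem_span_singleton] at ht ht'
    obtain ⟨htK, c, hc⟩ := ht
    obtain ⟨_, c', hc'⟩ := ht'
    have heb : e ∈ b := by simpa using he
    have heb' : e' ∈ b := by simpa using he'
    have hli : LinearIndependent ℂ ![e, e'] := by
      have := hbli.comp ![(⟨e, heb⟩ : b), ⟨e', heb'⟩] (by
        intro i j hij
        fin_cases i <;> fin_cases j <;> simp at hij ⊢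
        · exact hne hij
        · exact hne hij.symm)
      have hfun : (Subtype.val ∘ ![(⟨e, heb⟩ : b), ⟨e', heb'⟩]) = ![e, e'] := by
        funext i; fin_cases i <;> rfl
      rw [hfun] at this
      exact this
    have := LinearIndependent.pair_iff.1 hli c (-c') (by rw [neg_smul, hc, hc', add_neg_cancel])
    rw [this.1, zero_smul] at hc
    apply hK t htK
    rw [← W.ker_mkQ]
    exact hc.symm
  have hcard : (b.toFinset.card : ℝ) * θ ≤ K.card := by
    have h2 : (b.toFinset.biUnion F).card ≤ K.card := Finset.card_le_card (by
      intro t ht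
      rw [mem_biUnion] at ht
      obtain ⟨e, _, h⟩ := ht
      exact (mem_filter.1 h).1)
    rw [Finset.card_biUnion hdis] at h2
    have h3 : ∑ e ∈ b.toFinset, θ ≤ ∑ e ∈ b.toFinset, ((F e).card : ℝ) := Finset.sum_le_sum hF
    rw [Finset.sum_const, nsmul_eq_mul] at h3
    refine h3.trans ?_
    exact_mod_cast h2
  have h4 : (b.toFinset.card : ℝ) ≤ K.card / θ := by rwa [le_div_iff₀ hθ]
  have h5 : (Module.finrank ℂ (W ⊔ Submodule.span ℂ H : Submodule ℂ V) : ℝ) ≤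
      Module.finrank ℂ W + b.toFinset.card := by exact_mod_cast h1
  linarith

/-- Degree count for light points. -/
lemma aux_light {V : Type} [AddCommGroup V] [Module ℂ V]
    (W : Submodule ℂ V) (𝒲 𝒦 𝒯 : Finset V)
    (hW : ∀ w ∈ 𝒲, w ∈ W) (hK : ∀ p ∈ 𝒦, p ∉ W) (hT : ∀ x, x ∈ 𝒯 ↔ x ∈ 𝒦 ∨ x ∈ 𝒲)
    (hli : ∀ x ∈ 𝒯, ∀ y ∈ 𝒯, x ≠ y → ∀ s t : ℂ, s • x + t • y = 0 → s = 0 ∧ t = 0)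
    (p : V) (hp : p ∈ 𝒦) :
    ({q ∈ (𝒯 : Set V) | ∃ t ∈ 𝒯, t ≠ p ∧ t ≠ q ∧
            t ∈ Submodule.span ℂ ({p, q} : Set V)}).ncard ≤
      2 * ({t | t ∈ 𝒦 ∧ t ∈ W ⊔ Submodule.span ℂ {p}} : Set V).ncard +
      ({q | q ∈ 𝒦 ∧ ∃ t ∈ 𝒦, p ≠ q ∧ p ≠ t ∧ q ≠ t ∧ q ∉ W ⊔ Submodule.span ℂ {p} ∧
        t ∈ Submodule.span ℂ {p, q}} : Set V).ncard := by
  classical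
  set G := {q ∈ (𝒯 : Set V) | ∃ t ∈ 𝒯, t ≠ p ∧ t ≠ q ∧
            t ∈ Submodule.span ℂ ({p, q} : Set V)} with hG
  set Cl := ({t | t ∈ 𝒦 ∧ t ∈ W ⊔ Submodule.span ℂ {p}} : Set V) with hCl
  set Q := ({q | q ∈ 𝒦 ∧ ∃ t ∈ 𝒦, p ≠ q ∧ p ≠ t ∧ q ≠ t ∧ q ∉ W ⊔ Submodule.span ℂ {p} ∧
        t ∈ Submodule.span ℂ {p, q}} : Set V) with hQ
  have hpT : p ∈ 𝒯 := (hT p).2 (Or.inl hp)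
  have hClfin : Cl.Finite := 𝒦.finite_toSet.subset fun t h => h.1
  have hQfin : Q.Finite := 𝒦.finite_toSet.subset fun t h => h.1
  have hGW : (G ∩ {q | q ∈ 𝒲}).ncard ≤ Cl.ncard := by
    have hch : ∀ q ∈ G ∩ {q | q ∈ 𝒲}, ∃ t ∈ Cl, ∃ a b : ℂ, b ≠ 0 ∧ t = a • p + b • q := by
      rintro q ⟨⟨hqT, t, htT, htp, htq, hts⟩, hqW⟩
      obtain ⟨a, b, hab⟩ := Submodule.mem_span_pair.1 hts
      have hqW' := hW q hqW
      have hb : b ≠ 0 := by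
        rintro rfl
        have := hli t htT p hpT htp 1 (-a) (by rw [← hab]; module)
        exact one_ne_zero this.1
      refine ⟨t, ⟨?_, ?_⟩, a, b, hb, hab.symm⟩
      · rcases (hT t).1 htT with h | h
        · exact h
        · exfalso
          have ha : a = 0 := by
            by_contra ha
            apply hK p hp
            have : a • p ∈ W := by
              have h2 : a • p = t - b • q := by rw [← hab]; abel
              rw [h2]; exact W.sub_mem (hW t h) (W.smul_mem _ hqW')
            exact (W.smul_mem_iff ha).1 this
          have := hli t htT q hqT htq 1 (-b) (by rw [← hab, ha]; module)
          exact one_ne_zero this.1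
      · rw [← hab]
        exact Submodule.add_mem _
          (Submodule.mem_sup_right (Submodule.smul_mem _ _ (Submodule.mem_span_singleton_self p)))
          (Submodule.mem_sup_left (W.smul_mem _ hqW'))
    choose! τ hτ using hch
    refine Set.ncard_le_ncard_of_injOn τ (fun q hq => (hτ q hq).1) ?_ hClfin
    intro q hq q' hq' heq
    obtain ⟨_, a, b, hb, h⟩ := hτ q hq
    obtain ⟨_, a', b', hb', h'⟩ := hτ q' hq'
    by_contra hne
    have e : a • p + b • q = a' • p + b' • q' := by rw [← h, ← h', heq]
    have ha : a - a' = 0 := by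
      by_contra ha
      apply hK p hp
      have : (a - a') • p ∈ W := by
        have h2 : (a - a') • p = b' • q' - b • q := by
          rw [sub_smul, sub_eq_sub_iff_add_eq_add, e]; abel
        rw [h2]; exact W.sub_mem (W.smul_mem _ (hW _ hq'.2)) (W.smul_mem _ (hW _ hq.2))
      exact (W.smul_mem_iff ha).1 this
    have ha' : a = a' := sub_eq_zero.1 ha
    have e2 : b • q = b' • q' := by rw [ha'] at e; exact add_left_cancel e
    have := hli q hq.1.1 q' hq'.1.1 hne b (-b') (by rw [e2]; module)
    exact hb this.1
  have hsub : G ⊆ (G ∩ {q | q ∈ 𝒲}) ∪ Cl ∪ Q := by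
    intro q hq
    obtain ⟨hqT, t, htT, htp, htq, hts⟩ := id hq
    rcases (hT q).1 hqT with hqK | hqW
    swap
    · exact Or.inl (Or.inl ⟨hq, hqW⟩)
    by_cases hqc : q ∈ W ⊔ Submodule.span ℂ {p}
    · exact Or.inl (Or.inr ⟨hqK, hqc⟩)
    refine Or.inr ⟨hqK, t, ?_, ?_, htp.symm, htq.symm, hqc, hts⟩
    · rcases (hT t).1 htT with h | h
      · exact h
      exfalso
      obtain ⟨a, b, hab⟩ := Submodule.mem_span_pair.1 hts
      have hb : b ≠ 0 := by
        rintro rfl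
        have := hli t htT p hpT htp 1 (-a) (by rw [← hab]; module)
        exact one_ne_zero this.1
      apply hqc
      have : b • q ∈ W ⊔ Submodule.span ℂ {p} := by
        have h2 : b • q = t - a • p := by rw [← hab]; abel
        rw [h2]
        exact Submodule.sub_mem _ (Submodule.mem_sup_left (hW t h))
          (Submodule.mem_sup_right (Submodule.smul_mem _ _ (Submodule.mem_span_singleton_self p)))
      exact (Submodule.smul_mem_iff _ hb).1 this
    · rintro rfl
      exact hqc (Submodule.mem_sup_right (Submodule.mem_span_singleton_self p))
  have hGfin : G.Finite := 𝒯.finite_toSet.subset fun t h => h.1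
  have h1 := Set.ncard_le_ncard hsub (((hGfin.subset Set.inter_subset_left).union hClfin).union hQfin)
  have h2 := Set.ncard_union_le ((G ∩ {q | q ∈ 𝒲}) ∪ Cl) Q
  have h3 := Set.ncard_union_le (G ∩ {q | q ∈ 𝒲}) Cl
  omega

end aux

/-- robust SG modulo a subspace: there is a universal constant `C` such
that for any `r`-dimensional `W ⊆ ℂⁿ`, finite sets `𝒲 ⊂ W` and `𝒦 ⊂ ℂⁿ \ W` with
`𝒯 = 𝒦 ∪ 𝒲` pairwise linearly independent, if every `p ∈ 𝒦` spans together with a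
`δ`-fraction of `q ∈ 𝒯` a third point of `𝒯`, then `dim span 𝒯 ≤ C (r + 1/δ)`. -/
theorem stmt_14 :
    ∃ C : ℝ, 0 < C ∧ ∀ (n r : ℕ) (δ : ℝ), 0 < δ → δ ≤ 1 →
      ∀ (W : Submodule ℂ (Fin n → ℂ)), Module.finrank ℂ W = r →
      ∀ (𝒲 𝒦 𝒯 : Finset (Fin n → ℂ)),
        (∀ w ∈ 𝒲, w ∈ W) →
        (∀ p ∈ 𝒦, p ∉ W) →
        𝒯 = 𝒦 ∪ 𝒲 →
        (∀ x ∈ 𝒯, ∀ y ∈ 𝒯, x ≠ y → LinearIndependent ℂ ![x, y]) →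
        (∀ p ∈ 𝒦, δ * 𝒯.card ≤
          ({q ∈ (𝒯 : Set (Fin n → ℂ)) | ∃ t ∈ 𝒯, t ≠ p ∧ t ≠ q ∧
            t ∈ Submodule.span ℂ ({p, q} : Set (Fin n → ℂ))}.ncard : ℝ)) →
        (Module.finrank ℂ ↥(Submodule.span ℂ ((𝒯 : Set (Fin n → ℂ)))) : ℝ) ≤
          C * (r + 1 / δ) := by
  refine ⟨16, by norm_num, ?_⟩
  intro n r δ hδ hδ1 W hWr 𝒲 𝒦 𝒯 hW hK hTeq hli0 hcount
  classical
  have hT : ∀ x, x ∈ 𝒯 ↔ x ∈ 𝒦 ∨ x ∈ 𝒲 := by intro x; rw [hTeq, Finset.mem_union]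
  have hli : ∀ x ∈ 𝒯, ∀ y ∈ 𝒯, x ≠ y → ∀ s t : ℂ, s • x + t • y = 0 → s = 0 ∧ t = 0 :=
    fun x hx y hy hxy => LinearIndependent.pair_iff.1 (hli0 x hx y hy hxy)
  rcases Finset.eq_empty_or_nonempty 𝒦 with hemp | hnonemp
  · have hle : Submodule.span ℂ (𝒯 : Set (Fin n → ℂ)) ≤ W := by
      rw [Submodule.span_le]
      intro x hx
      rcases (hT x).1 hx with h | h
      · simp [hemp] at h
      · exact hW x h
    have h1 := Submodule.finrank_mono hle
    rw [hWr] at h1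
    have h2 : (Module.finrank ℂ ↥(Submodule.span ℂ ((𝒯 : Set (Fin n → ℂ)))) : ℝ) ≤ r := by
      exact_mod_cast h1
    have h3 : 0 < 1 / δ := by positivity
    have h4 : (0:ℝ) ≤ r := Nat.cast_nonneg r
    linarith
  have hKT : 𝒦 ⊆ 𝒯 := fun x hx => (hT x).2 (Or.inl hx)
  have hKm : (𝒦.card : ℝ) ≤ 𝒯.card := by exact_mod_cast Finset.card_le_card hKT
  have hKpos : (0 : ℝ) < 𝒦.card := by exact_mod_cast hnonemp.card_pos
  set m : ℝ := (𝒯.card : ℝ) with hm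
  have hmpos : 0 < m := lt_of_lt_of_le hKpos hKm
  set θ : ℝ := δ * m / 4 with hθ
  have hθpos : 0 < θ := by positivity
  set N : ℝ := δ * m / 2 with hN
  have hNpos : 0 < N := by positivity
  let cl : (Fin n → ℂ) → Set (Fin n → ℂ) := fun p => {t | t ∈ 𝒦 ∧ t ∈ W ⊔ Submodule.span ℂ {p}}
  let H : Set (Fin n → ℂ) := {p | p ∈ 𝒦 ∧ θ ≤ (cl p).ncard}
  set W' : Submodule ℂ (Fin n → ℂ) := W ⊔ Submodule.span ℂ H with hW'
  have hdimW' := aux_heavy W 𝒦 hK H θ hθpos (fun p hp => hp.2)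
  rw [← hW', hWr] at hdimW'
  let u : 𝒦 → (Fin n → ℂ) ⧸ W' := fun p => W'.mkQ p
  let D : 𝒦 → 𝒦 → 𝒦 → Prop := fun p q t => p ≠ q ∧ p ≠ t ∧ q ≠ t ∧
    (q : Fin n → ℂ) ∉ W ⊔ Submodule.span ℂ {(p : Fin n → ℂ)} ∧
    (t : Fin n → ℂ) ∈ Submodule.span ℂ {(p : Fin n → ℂ), (q : Fin n → ℂ)}
  have hval : ∀ p q : 𝒦, p ≠ q → (p : Fin n → ℂ) ≠ q := fun p q h h' => h (Subtype.ext h')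
  have hcoef : ∀ p q t, D p q t → ∃ a b : ℂ, a ≠ 0 ∧ b ≠ 0 ∧
      (t : Fin n → ℂ) = a • (p : Fin n → ℂ) + b • (q : Fin n → ℂ) := by
    rintro p q t ⟨hpq, hpt, hqt, hq, ht⟩
    obtain ⟨a, b, hab⟩ := Submodule.mem_span_pair.1 ht
    refine ⟨a, b, ?_, ?_, hab.symm⟩
    · rintro rfl
      have := hli t (hKT t.2) q (hKT q.2) (hval _ _ hqt.symm) 1 (-b) (by rw [← hab]; module)
      exact one_ne_zero this.1
    · rintro rfl
      have := hli t (hKT t.2) p (hKT p.2) (hval _ _ hpt.symm) 1 (-a) (by rw [← hab]; module)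
      exact one_ne_zero this.1
  have hs1 : ∀ p q t, D p q t → D q p t := by
    rintro p q t ⟨hpq, hpt, hqt, hq, ht⟩
    refine ⟨hpq.symm, hqt, hpt, ?_, by rwa [Set.pair_comm]⟩
    intro hp
    obtain ⟨x, hx, y, hy, hxy⟩ := Submodule.mem_sup.1 hp
    obtain ⟨c, rfl⟩ := Submodule.mem_span_singleton.1 hy
    have hc : c ≠ 0 := by
      rintro rfl
      apply hK p p.2
      rw [← hxy]; simpa using hx
    apply hq
    have : c • (q : Fin n → ℂ) ∈ W ⊔ Submodule.span ℂ {(p : Fin n → ℂ)} := by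
      have h2 : c • (q : Fin n → ℂ) = p - x := by rw [← hxy]; abel
      rw [h2]
      exact Submodule.sub_mem _ (Submodule.mem_sup_right (Submodule.mem_span_singleton_self _))
        (Submodule.mem_sup_left hx)
    exact (Submodule.smul_mem_iff _ hc).1 this
  have hs2 : ∀ p q t, D p q t → D p t q := by
    intro p q t h
    obtain ⟨a, b, ha, hb, hab⟩ := hcoef p q t h
    obtain ⟨hpq, hpt, hqt, hq, ht⟩ := h
    have hqe : (q : Fin n → ℂ) = (-(b⁻¹ * a)) • (p : Fin n → ℂ) + b⁻¹ • (t : Fin n → ℂ) := by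
      rw [hab, smul_add, smul_smul, smul_smul, inv_mul_cancel₀ hb]; module
    refine ⟨hpt, hpq, hqt.symm, ?_, ?_⟩
    · intro htm
      apply hq
      rw [hqe]
      exact Submodule.add_mem _
        (Submodule.mem_sup_right (Submodule.smul_mem _ _ (Submodule.mem_span_singleton_self _)))
        (Submodule.smul_mem _ _ htm)
    · exact Submodule.mem_span_pair.2 ⟨_, _, hqe.symm⟩
  have hex : ∀ p q t s, D p q t → D p q s → s ≠ t → D p t s := by
    intro p q t s h h' hst
    obtain ⟨hpt, hpq, htq, htn, hqs⟩ := hs2 _ _ _ h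
    refine ⟨hpt, h'.2.1, hst.symm, htn, ?_⟩
    have hle : Submodule.span ℂ {(p : Fin n → ℂ), (q : Fin n → ℂ)} ≤
        Submodule.span ℂ {(p : Fin n → ℂ), (t : Fin n → ℂ)} := by
      rw [Submodule.span_le]
      rintro x (rfl | rfl)
      · exact Submodule.subset_span (by simp)
      · exact hqs
    exact hle h'.2.2.2.2
  have hmain := aux_comb u (fun p => (p : Fin n → ℂ) ∉ H) D
    (fun p q t h => ⟨h.1, h.2.1, h.2.2.1⟩) hs1 hs2 hex
    (by
      intro p q t h
      obtain ⟨a, b, _, _, hab⟩ := hcoef q t p (hs2 _ _ _ (hs1 _ _ _ h))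
      refine ⟨a, b, ?_⟩
      simp only [u]
      rw [hab, map_add, map_smul, map_smul])
    (by
      intro p hp
      simp only [not_not] at hp
      simp only [u]
      rw [Submodule.mkQ_apply, Submodule.Quotient.mk_eq_zero]
      exact Submodule.mem_sup_right (Submodule.subset_span hp))
    N hNpos
    (by
      intro p hp
      have h1 := aux_light W 𝒲 𝒦 𝒯 hW hK hT hli p p.2
      have h2 := hcount p p.2
      have h3 : ((cl p).ncard : ℝ) < θ := by
        by_contra hcon
        exact hp ⟨p.2, not_lt.1 hcon⟩
      have h4 : ({q | q ∈ 𝒦 ∧ ∃ t ∈ 𝒦, (p : Fin n → ℂ) ≠ q ∧ (p : Fin n → ℂ) ≠ t ∧ q ≠ t ∧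
          q ∉ W ⊔ Submodule.span ℂ {(p : Fin n → ℂ)} ∧
          t ∈ Submodule.span ℂ {(p : Fin n → ℂ), q}} : Set (Fin n → ℂ)).ncard ≤
          ({q | ∃ t, D p q t} : Set 𝒦).ncard := by
        rw [← Set.ncard_image_of_injective _ (Subtype.val_injective (p := fun x => x ∈ 𝒦))]
        apply Set.ncard_le_ncard _ (Set.toFinite _)
        rintro q ⟨hq, t, ht, e1, e2, e3, e4, e5⟩
        refine ⟨⟨q, hq⟩, ⟨⟨t, ht⟩, ?_, ?_, ?_, e4, e5⟩, rfl⟩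
        · exact fun h => e1 (congrArg Subtype.val h)
        · exact fun h => e2 (congrArg Subtype.val h)
        · exact fun h => e3 (congrArg Subtype.val h)
      have h5 := h1.trans (Nat.add_le_add_left h4 _)
      have h6 : δ * m ≤ 2 * ((cl p).ncard : ℝ) + (({q | ∃ t, D p q t} : Set 𝒦).ncard : ℝ) := by
        refine h2.trans ?_
        exact_mod_cast h5
      simp only [hN]; simp only [hθ] at h3
      linarith)
  have hq := aux_quot W' (Submodule.span ℂ (𝒯 : Set (Fin n → ℂ)))
  have hle : (Submodule.span ℂ (𝒯 : Set (Fin n → ℂ))).map W'.mkQ ≤ Submodule.span ℂ (Set.range u) := by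
    rw [Submodule.map_span, Submodule.span_le]
    rintro _ ⟨x, hx, rfl⟩
    rcases (hT x).1 hx with h | h
    · exact Submodule.subset_span ⟨⟨x, h⟩, rfl⟩
    · have : W'.mkQ x = 0 := by
        rw [Submodule.mkQ_apply, Submodule.Quotient.mk_eq_zero]
        exact Submodule.mem_sup_left (hW x h)
      rw [this]; exact Submodule.zero_mem _
  have hq2 := hq.trans (Nat.add_le_add_left (Submodule.finrank_mono hle) _)
  have hq3 : (Module.finrank ℂ ↥(Submodule.span ℂ ((𝒯 : Set (Fin n → ℂ)))) : ℝ) ≤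
      Module.finrank ℂ W' + Module.finrank ℂ (Submodule.span ℂ (Set.range u)) := by
    exact_mod_cast hq2
  rw [Fintype.card_coe] at hmain
  have e1 : (𝒦.card : ℝ) / θ ≤ 4 / δ := by
    rw [div_le_div_iff₀ hθpos hδ]; simp only [hθ]; nlinarith
  have e2 : 6 / N * (𝒦.card : ℝ) ≤ 12 / δ := by
    rw [div_mul_eq_mul_div, div_le_div_iff₀ hNpos hδ]; simp only [hN]; nlinarith
  have e3 : (4 : ℝ) / δ + 12 / δ = 16 * (1 / δ) := by ring
  have h4 : (0:ℝ) ≤ r := Nat.cast_nonneg r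
  linarith
end
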